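/- Let X and Y be compact topological 2-manifolds with boundary that are homeomorphic to each other, and let h : X → Y be a continuous, surjective, monotone mapping. Then Int(Y) ⊂ h(Int(X)), ∂Y = h(∂X), and the restriction h|_{∂X} : ∂X → ∂Y is monotone. -/

import Mathlib

open Set

/-!
STATEMENT 18 (Youngs): Let `X` and `Y` be compact topological 2-manifolds with boundary
that are homeomorphic, and `h : X → Y` a continuous, surjective, monotone map.  Then
`Int Y ⊆ h(Int X)`, `∂Y = h(∂X)`, and the restriction of `h` to `∂X` is monotone.

A point of a topological 2-manifold-with-boundary is an interior point if it admits an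
open neighborhood homeomorphic to `ℝ²`; the manifold boundary is the complement of the set
of interior points.  Monotonicity of `h|∂X : ∂X → ∂Y` means that the preimage in `∂X` of
every point of `∂Y` is connected (connectedness of a subset of `∂X` being the same whether
computed in the subspace `∂X` or in `X`).
-/

/-- The manifold interior of a topological space: points with an open neighborhood
homeomorphic to the plane `ℝ²`. -/
def manifoldInterior (Z : Type*) [TopologicalSpace Z] : Set Z :=
  {x | ∃ U : Set Z, IsOpen U ∧ x ∈ U ∧ Nonempty (↥U ≃ₜ EuclideanSpace ℝ (Fin 2))}

/-- The manifold boundary: the complement of the manifold interior. -/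
def manifoldBoundary (Z : Type*) [TopologicalSpace Z] : Set Z :=
  (manifoldInterior Z)ᶜ

/-!
Cohomology of degree one with coefficients in `ℤ/2` replaces plane topology. A closed cochain with
finitely many singularities, all in the interior, has a residue in `ℤ/2` at each of them, and on a
compact surface it cannot vanish along the boundary and have exactly one nonzero residue. An arc is
represented by its dual cochain, whose residues sit at the interior endpoints of the arc.

The map `h` is closed with connected fibres, so `h^*` is injective on first cohomology; as `X` and
`Y` are homeomorphic and these groups are finite, `h^*` is onto. Hence every closed cochain on `X`
becomes exact over a disc of `Y`, so that the preimage of a disc can be cut like a disc. In each of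
the cases below, a violation of the claim would allow one to cut the cochain of an arc in the middle
and be left with a single residue.
-/

open Topology Filter

variable {X Y M : Type*} [TopologicalSpace X] [TopologicalSpace Y] [TopologicalSpace M]

/-- Alexander–Spanier `1`-cochains with coefficients in `ℤ/2`. Only the values near the diagonal
matter: cochains are compared and tested for exactness through germs along the diagonal. -/
abbrev Cochain (X : Type*) := X → X → ZMod 2

namespace Cochain

section Germs

/-- The Alexander–Spanier coboundary of a `0`-cochain; the sign is immaterial modulo `2`. -/
def coboundary (c : X → ZMod 2) : Cochain X := fun a b => c a + c b

/-- The pullback of a cochain along a map, not assumed continuous. -/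
def pullback (f : X → Y) (φ : Cochain Y) : Cochain X := fun a b => φ (f a) (f b)

/-- Equality of the germs of two cochains at the diagonal point `(x, x)`. -/
def AgreeAt (φ ψ : Cochain X) (x : X) : Prop := ∀ᶠ p in 𝓝 (x, x), φ p.1 p.2 = ψ p.1 p.2

/-- `c` is a primitive of the cochain `φ` near `x`. -/
abbrev HasPrimitiveAt (φ : Cochain X) (c : X → ZMod 2) (x : X) : Prop :=
  AgreeAt φ (coboundary c) x

/-- The germ of a cochain at a diagonal point is zero; `{x | ¬ VanishesAt φ x}` is the support
of `φ`. -/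
abbrev VanishesAt (φ : Cochain X) (x : X) : Prop := AgreeAt φ 0 x

/-- Local exactness at a point. A cochain that is exact at every point is an Alexander–Spanier
cocycle; the points where exactness fails are its singularities. -/
def ExactAt (φ : Cochain X) (x : X) : Prop := ∃ c, HasPrimitiveAt φ c x

/-- Exactness on a set: existence of one primitive near all of its points. -/
def ExactOn (φ : Cochain X) (U : Set X) : Prop := ∃ c, ∀ x ∈ U, HasPrimitiveAt φ c x

/-- Vanishing of the first cohomology of an open set `U` with coefficients in `ℤ/2`. -/
def H1Trivial (U : Set X) : Prop := ∀ φ : Cochain X, (∀ x ∈ U, ExactAt φ x) → ExactOn φ U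

variable {φ φ' ψ ψ' χ : Cochain X} {c d : X → ZMod 2} {x : X} {U V : Set X}

@[simp]
lemma coboundary_zero {X : Type*} : coboundary (0 : X → ZMod 2) = 0 := by
  ext; simp [coboundary]

lemma coboundary_add {X : Type*} (c d : X → ZMod 2) :
    coboundary (c + d) = coboundary c + coboundary d := by
  ext; simp only [coboundary, Pi.add_apply]; ring

lemma AgreeAt.refl (φ : Cochain X) (x : X) : AgreeAt φ φ x := Eventually.of_forall fun _ => rfl

lemma AgreeAt.symm (h : AgreeAt φ ψ x) : AgreeAt ψ φ x := by
  filter_upwards [h] with p hp using hp.symm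

lemma AgreeAt.trans (h : AgreeAt φ ψ x) (h' : AgreeAt ψ χ x) : AgreeAt φ χ x := by
  filter_upwards [h, h'] with p hp hp' using hp.trans hp'

lemma AgreeAt.add (h : AgreeAt φ ψ x) (h' : AgreeAt φ' ψ' x) :
    AgreeAt (φ + φ') (ψ + ψ') x := by
  filter_upwards [h, h'] with p hp hp' using congrArg₂ (· + ·) hp hp'

lemma AgreeAt.of_mem_nhds (hU : U ∈ 𝓝 x) (h : ∀ a ∈ U, ∀ b ∈ U, φ a b = ψ a b) :
    AgreeAt φ ψ x := by
  filter_upwards [prod_mem_nhds hU hU] with p hp using h _ hp.1 _ hp.2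

lemma AgreeAt.pullback {f : Y → X} {y : Y} (h : AgreeAt φ ψ (f y)) (hf : ContinuousAt f y) :
    AgreeAt (pullback f φ) (pullback f ψ) y := by
  have : Tendsto (Prod.map f f) (𝓝 (y, y)) (𝓝 (f y, f y)) := by
    simpa only [nhds_prod_eq] using hf.tendsto.prodMap hf.tendsto
  exact this.eventually h

lemma isOpen_setOf_agreeAt (φ ψ : Cochain X) : IsOpen {x | AgreeAt φ ψ x} :=
  isOpen_setOfPred_eventually_nhds.preimage (continuous_id.prodMk continuous_id)

lemma AgreeAt.eventually (h : AgreeAt φ ψ x) : ∀ᶠ y in 𝓝 x, AgreeAt φ ψ y :=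
  (isOpen_setOf_agreeAt φ ψ).mem_nhds h

lemma agreeAt_add_right_iff : AgreeAt (φ + ψ) ψ x ↔ VanishesAt φ x := by
  simp only [AgreeAt, Pi.add_apply, add_eq_right, Pi.zero_apply]

lemma vanishesAt_add_iff : VanishesAt (φ + ψ) x ↔ AgreeAt φ ψ x := by
  simp only [AgreeAt, Pi.add_apply, Pi.zero_apply, CharTwo.add_eq_zero]

lemma VanishesAt.add (h : VanishesAt φ x) (h' : VanishesAt ψ x) : VanishesAt (φ + ψ) x := by
  simpa only [add_zero] using AgreeAt.add h h'

lemma HasPrimitiveAt.add (h : HasPrimitiveAt φ c x) (h' : HasPrimitiveAt ψ d x) :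
    HasPrimitiveAt (φ + ψ) (c + d) x :=
  (AgreeAt.add h h').trans (coboundary_add c d ▸ AgreeAt.refl _ x)

lemma vanishesAt_coboundary_iff : VanishesAt (coboundary c) x ↔ ∀ᶠ a in 𝓝 x, c a = c x := by
  simp only [AgreeAt, coboundary, Pi.zero_apply, CharTwo.add_eq_zero]
  constructor
  · exact fun h => (Continuous.tendsto' (by fun_prop : Continuous fun a => (a, x)) x (x, x) rfl)
      |>.eventually h
  · intro h
    filter_upwards [Eventually.prodMk_nhds h h] with p hp using hp.1.trans hp.2.symm

lemma vanishesAt_coboundary_of_mem_nhds (hU : U ∈ 𝓝 x) {k : ZMod 2} (h : ∀ a ∈ U, c a = k) :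
    VanishesAt (coboundary c) x := by
  refine vanishesAt_coboundary_iff.2 ?_
  filter_upwards [hU] with a ha using (h a ha).trans (h x (mem_of_mem_nhds hU)).symm

lemma HasPrimitiveAt.congr (h : HasPrimitiveAt φ c x) (hcd : ∀ᶠ a in 𝓝 x, c a = d a) :
    HasPrimitiveAt φ d x := by
  filter_upwards [h, Eventually.prodMk_nhds hcd hcd] with p hp hq
  simpa only [coboundary, hq.1, hq.2] using hp

lemma HasPrimitiveAt.add_const (h : HasPrimitiveAt φ c x) (k : ZMod 2) :
    HasPrimitiveAt φ (fun a => c a + k) x := by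
  filter_upwards [h] with p hp
  rw [hp]
  simp only [coboundary]
  grind

lemma HasPrimitiveAt.congr_add_const (h : HasPrimitiveAt φ c x) (k : ZMod 2)
    (hd : ∀ᶠ a in 𝓝 x, c a + d a = k) : HasPrimitiveAt φ d x :=
  (h.add_const k).congr <| hd.mono fun a ha => by grind

lemma HasPrimitiveAt.eventually_add_eq (h : HasPrimitiveAt φ c x) (h' : HasPrimitiveAt φ d x) :
    ∀ᶠ a in 𝓝 x, c a + d a = c x + d x := by
  have := (AgreeAt.symm h).trans h'
  exact vanishesAt_coboundary_iff.1 (coboundary_add c d ▸ vanishesAt_add_iff.2 this)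

lemma HasPrimitiveAt.pullback {f : Y → X} {y : Y} (h : HasPrimitiveAt φ c (f y))
    (hf : ContinuousAt f y) : HasPrimitiveAt (pullback f φ) (c ∘ f) y :=
  AgreeAt.pullback h hf

lemma hasPrimitiveAt_coboundary (c : X → ZMod 2) (x : X) : HasPrimitiveAt (coboundary c) c x :=
  AgreeAt.refl _ x

lemma AgreeAt.exactAt (h : AgreeAt φ ψ x) (hψ : ExactAt ψ x) : ExactAt φ x :=
  hψ.imp fun _ hc => h.trans hc

lemma VanishesAt.exactAt (h : VanishesAt φ x) : ExactAt φ x :=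
  ⟨0, h.trans (coboundary_zero (X := X) ▸ AgreeAt.refl _ x)⟩

lemma ExactAt.add (h : ExactAt φ x) (h' : ExactAt ψ x) : ExactAt (φ + ψ) x := by
  obtain ⟨c, hc⟩ := h
  obtain ⟨d, hd⟩ := h'
  exact ⟨c + d, hc.add hd⟩

lemma ExactAt.pullback {f : Y → X} {y : Y} (h : ExactAt φ (f y)) (hf : ContinuousAt f y) :
    ExactAt (pullback f φ) y := by
  obtain ⟨c, hc⟩ := h
  exact ⟨c ∘ f, hc.pullback hf⟩

lemma ExactOn.mono (h : ExactOn φ V) (hUV : U ⊆ V) : ExactOn φ U :=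
  h.imp fun _ hc x hx => hc x (hUV hx)

lemma ExactOn.add (h : ExactOn φ U) (h' : ExactOn ψ U) : ExactOn (φ + ψ) U := by
  obtain ⟨c, hc⟩ := h
  obtain ⟨d, hd⟩ := h'
  exact ⟨c + d, fun x hx => (hc x hx).add (hd x hx)⟩

lemma ExactOn.pullback {f : Y → X} (h : ExactOn φ U) (hf : Continuous f) :
    ExactOn (pullback f φ) (f ⁻¹' U) := by
  obtain ⟨c, hc⟩ := h
  exact ⟨c ∘ f, fun y hy => (hc (f y) hy).pullback hf.continuousAt⟩

lemma exactOn_of_vanishesAt (h : ∀ x ∈ U, VanishesAt φ x) : ExactOn φ U :=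
  ⟨0, fun x hx => (h x hx).trans (coboundary_zero (X := X) ▸ AgreeAt.refl _ x)⟩

end Germs

section Gluing

variable {φ : Cochain X} {c d : X → ZMod 2} {S U V : Set X}

lemma eq_of_isPreconnected (hS : IsPreconnected S) (h : ∀ x ∈ S, ∀ᶠ a in 𝓝 x, c a = c x)
    {a b : X} (ha : a ∈ S) (hb : b ∈ S) : c a = c b :=
  hS.induction₂ (fun x y => c x = c y)
    (fun x hx => (h x hx).filter_mono nhdsWithin_le_nhds |>.mono fun _ => Eq.symm)
    (fun _ _ _ _ _ _ => Eq.trans) (fun _ _ _ _ => Eq.symm) ha hb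

lemma exists_primitive_add_eq_const (hS : IsPreconnected S)
    (hc : ∀ x ∈ S, HasPrimitiveAt φ c x) (hd : ∀ x ∈ S, HasPrimitiveAt φ d x) :
    ∃ k, ∀ x ∈ S, c x + d x = k := by
  rcases S.eq_empty_or_nonempty with rfl | ⟨x₀, hx₀⟩
  · exact ⟨0, by simp⟩
  · exact ⟨c x₀ + d x₀, fun x hx => eq_of_isPreconnected (c := c + d) hS
      (fun y hy => (hc y hy).eventually_add_eq (hd y hy)) hx hx₀⟩

lemma exactOn_union_of_add_eq_const (hU : IsOpen U) (hV : IsOpen V) {k : ZMod 2}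
    (hc : ∀ x ∈ U, HasPrimitiveAt φ c x) (hd : ∀ x ∈ V, HasPrimitiveAt φ d x)
    (hk : ∀ x ∈ U ∩ V, c x + d x = k) : ExactOn φ (U ∪ V) := by
  classical
  refine ⟨fun x => if x ∈ U then c x else d x + k, ?_⟩
  rintro x (hx | hx)
  · refine (hc x hx).congr ?_
    filter_upwards [hU.mem_nhds hx] with a ha using (if_pos ha).symm
  · refine (hd x hx).congr_add_const k ?_
    filter_upwards [hV.mem_nhds hx] with a ha
    split_ifs with haU
    · rw [add_comm, hk a ⟨haU, ha⟩]
    · grind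

lemma ExactOn.union (hU : IsOpen U) (hV : IsOpen V) (hUV : IsPreconnected (U ∩ V))
    (h : ExactOn φ U) (h' : ExactOn φ V) : ExactOn φ (U ∪ V) := by
  obtain ⟨c, hc⟩ := h
  obtain ⟨d, hd⟩ := h'
  obtain ⟨k, hk⟩ := exists_primitive_add_eq_const hUV (fun x hx => hc x hx.1) fun x hx => hd x hx.2
  exact exactOn_union_of_add_eq_const hU hV hc hd hk

lemma ExactOn.union_of_level {p : X → ℝ} (hp : Continuous p) {r : ℝ}
    (hS : IsPreconnected (S ∩ p ⁻¹' {r})) (h : ExactOn φ (S ∩ p ⁻¹' Iic r))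
    (h' : ExactOn φ (S ∩ p ⁻¹' Ici r)) : ExactOn φ S := by
  classical
  obtain ⟨c, hc⟩ := h
  obtain ⟨d, hd⟩ := h'
  have hle : ∀ x ∈ S ∩ p ⁻¹' {r}, HasPrimitiveAt φ c x := fun x hx => hc x ⟨hx.1, hx.2.le⟩
  have hge : ∀ x ∈ S ∩ p ⁻¹' {r}, HasPrimitiveAt φ d x := fun x hx => hd x ⟨hx.1, hx.2.ge⟩
  obtain ⟨k, hk⟩ := exists_primitive_add_eq_const hS hle hge
  refine ⟨fun x => if p x < r then c x else d x + k, fun x hx => ?_⟩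
  rcases lt_trichotomy (p x) r with hlt | heq | hgt
  · refine (hc x ⟨hx, hlt.le⟩).congr ?_
    filter_upwards [(isOpen_lt hp continuous_const).mem_nhds hlt] with a ha using (if_pos ha).symm
  · refine (hle x ⟨hx, heq⟩).congr ?_
    filter_upwards [(hle x ⟨hx, heq⟩).eventually_add_eq (hge x ⟨hx, heq⟩)] with a ha
    have := hk x ⟨hx, heq⟩
    split_ifs <;> grind
  · refine ((hd x ⟨hx, hgt.le⟩).add_const k).congr ?_
    filter_upwards [(isOpen_lt continuous_const hp).mem_nhds hgt] with a ha
      using (if_neg (not_lt.2 (le_of_lt ha))).symm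

end Gluing

end Cochain

section MonotoneMaps

lemma isPreconnected_preimage_of_monotone {f : X → Y} (hcl : IsClosedMap f)
    (hs : Function.Surjective f) (hm : ∀ y, IsPreconnected (f ⁻¹' {y})) {S : Set Y}
    (hS : IsPreconnected S) : IsPreconnected (f ⁻¹' S) := by
  rw [isPreconnected_closed_iff] at hS ⊢
  rintro u v hu hv huv ⟨a, ha, hau⟩ ⟨b, hb, hbv⟩
  obtain ⟨y, hyS, ⟨a', ha', rfl⟩, b', hb', hba⟩ := hS (f '' u) (f '' v) (hcl u hu) (hcl v hv)
    (fun y hy => by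
      obtain ⟨x, rfl⟩ := hs y
      exact (huv hy).imp (mem_image_of_mem f) (mem_image_of_mem f))
    ⟨f a, ha, mem_image_of_mem f hau⟩ ⟨f b, hb, mem_image_of_mem f hbv⟩
  have hfib : f ⁻¹' {f a'} ⊆ f ⁻¹' S := preimage_mono (singleton_subset_iff.2 hyS)
  exact (isPreconnected_closed_iff.1 (hm (f a')) u v hu hv (hfib.trans huv)
    ⟨a', rfl, ha'⟩ ⟨b', hba, hb'⟩).mono (inter_subset_inter_left _ hfib)

namespace Cochain

-- The injectivity part of the Vietoris–Begle mapping theorem in degree one.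
lemma exactOn_of_exactOn_pullback {f : X → Y} (hc : Continuous f) (hcl : IsClosedMap f)
    (hs : Function.Surjective f) (hm : ∀ y, IsPreconnected (f ⁻¹' {y})) {φ : Cochain Y}
    {U : Set Y} (hφ : ∀ y ∈ U, ExactAt φ y) (h : ExactOn (pullback f φ) (f ⁻¹' U)) :
    ExactOn φ U := by
  obtain ⟨c, hcf⟩ := h
  refine ⟨c ∘ Function.surjInv hs, fun y hy => ?_⟩
  obtain ⟨d, hd⟩ := hφ y hy
  have hlc : ∀ x ∈ f ⁻¹' {y}, ∀ᶠ a in 𝓝 x, (c + d ∘ f) a = (c + d ∘ f) x := by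
    rintro x rfl
    exact (hcf x hy).eventually_add_eq (hd.pullback hc.continuousAt)
  set k := (c + d ∘ f) (Function.surjInv hs y)
  have hnhds : ∀ᶠ x in 𝓝ˢ (f ⁻¹' {y}), (c + d ∘ f) x = k := by
    refine eventually_nhdsSet_iff_forall.2 fun x hx => (hlc x hx).mono fun a ha => ?_
    exact ha.trans (eq_of_isPreconnected (hm y) hlc hx (Function.surjInv_eq hs y))
  refine hd.congr_add_const k ?_
  filter_upwards [eventually_comap.1 (hnhds.filter_mono hcl.comap_nhds_le)] with z hz
  have := hz _ (Function.surjInv_eq hs z)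
  simp only [Pi.add_apply, Function.comp_apply, Function.surjInv_eq hs z] at this ⊢
  rw [add_comm, this]

end Cochain

end MonotoneMaps

namespace Cochain

section StarShaped

variable {E : Type*} [NormedAddCommGroup E] [NormedSpace ℝ E]

lemma exactOn_image_of_leftInverse {p : X → ℝ} {γ : ℝ → X} (hp : Continuous p) (hγ : Continuous γ)
    (hpγ : Function.LeftInverse p γ) {φ : Cochain X} (h : ∀ t ∈ Icc (0 : ℝ) 1, ExactAt φ (γ t)) :
    ExactOn φ (γ '' Icc 0 1) := by
  obtain ⟨t, ht0, -, ⟨n, hn⟩, ht⟩ := exists_monotone_Icc_subset_open_cover_unitInterval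
    (c := fun c : X → ZMod 2 => {s | HasPrimitiveAt φ c (γ s)})
    (fun c => (isOpen_setOf_agreeAt φ _).preimage (hγ.comp continuous_subtype_val))
    (fun s _ => mem_iUnion.2 (h s s.2))
  have hinter : ∀ I J : Set ℝ, γ '' I ∩ p ⁻¹' J = γ '' (I ∩ J) := by
    intro I J
    rw [← image_inter_preimage, ← preimage_comp, show p ∘ γ = id from funext hpγ, preimage_id]
  have hpiece : ∀ m, ∃ c, ∀ s ∈ Icc (t m : ℝ) (t (m + 1)), HasPrimitiveAt φ c (γ s) := fun m =>
    (ht m).imp fun c hc s hs =>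
      hc (show ⟨s, (t m).2.1.trans hs.1, hs.2.trans (t (m + 1)).2.2⟩ ∈ Icc _ _ from hs)
  have key : ∀ m, ExactOn φ (γ '' Icc 0 (t m)) := by
    intro m
    induction m with
    | zero => simpa [ht0, ExactOn, ExactAt] using h 0 (by simp)
    | succ m ih =>
      obtain ⟨c, hc⟩ := hpiece m
      refine ExactOn.union_of_level hp (r := t m) ?_ (ih.mono ?_) ⟨c, ?_⟩
      · rw [hinter]
        exact (subsingleton_singleton.anti inter_subset_right).image γ |>.isPreconnected
      · rw [hinter]
        exact image_mono fun s hs => ⟨hs.1.1, hs.2⟩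
      · rw [hinter]
        exact forall_mem_image.2 fun s hs => hc s ⟨hs.2, hs.1.2⟩
  simpa [hn n le_rfl] using key n

lemma exactOn_segment {φ : Cochain E} {x₀ x : E} (h : ∀ z ∈ segment ℝ x₀ x, ExactAt φ z) :
    ExactOn φ (segment ℝ x₀ x) := by
  rcases eq_or_ne x x₀ with rfl | hx
  · simpa [ExactOn, ExactAt] using h
  obtain ⟨f, hf⟩ := SeparatingDual.exists_eq_one (R := ℝ) (sub_ne_zero.2 hx)
  rw [segment_eq_image'] at h ⊢
  refine exactOn_image_of_leftInverse (p := fun z => f (z - x₀)) (by fun_prop) (by fun_prop) ?_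
    (fun t ht => h _ (mem_image_of_mem _ ht))
  exact fun t => by simp [hf]

lemma h1Trivial_of_starConvex {B : Set E} {x₀ : E} (hB : IsOpen B) (hst : StarConvex ℝ x₀ B) :
    H1Trivial B := by
  intro φ hφ
  have hseg : ∀ x ∈ B, ExactOn φ (segment ℝ x₀ x) := fun x hx =>
    exactOn_segment fun z hz => hφ z (hst.segment_subset hx hz)
  choose! c hc using hseg
  refine ⟨fun x => c x x + c x x₀, fun y hy => ?_⟩
  have hnear : ∀ᶠ z in 𝓝 y, ∀ t ∈ Icc (0 : ℝ) 1, HasPrimitiveAt φ (c y) (x₀ + t • (z - x₀)) := by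
    refine isCompact_Icc.eventually_forall_of_forall_eventually fun t ht => ?_
    have hcont : Continuous fun q : E × ℝ => x₀ + q.2 • (q.1 - x₀) := by fun_prop
    exact hcont.continuousAt.eventually
      ((hc y hy _ (segment_eq_image' ℝ x₀ y ▸ mem_image_of_mem _ ht)).eventually)
  refine (hc y hy y (right_mem_segment ℝ x₀ y)).congr_add_const (c y x₀) ?_
  filter_upwards [hnear, hB.mem_nhds hy] with z hz hzB
  have hlc : ∀ u ∈ segment ℝ x₀ z, ∀ᶠ a in 𝓝 u, (c y + c z) a = (c y + c z) u := by
    intro u hu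
    obtain ⟨t, ht, rfl⟩ := segment_eq_image' ℝ x₀ z ▸ hu
    exact (hz t ht).eventually_add_eq (hc z hzB _ hu)
  have := eq_of_isPreconnected (convex_segment (𝕜 := ℝ) x₀ z).isPreconnected hlc
    (left_mem_segment ℝ x₀ z) (right_mem_segment ℝ x₀ z)
  simp only [Pi.add_apply] at this
  grind

end StarShaped

section Retracts

lemma h1Trivial_univ_of_leftInverse {r : X → Y} {i : Y → X} (hr : Continuous r)
    (hi : Continuous i) (hri : Function.LeftInverse r i) (h : H1Trivial (univ : Set X)) :
    H1Trivial (univ : Set Y) := by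
  intro φ hφ
  have := (h (pullback r φ) fun x _ => (hφ _ trivial).pullback hr.continuousAt).pullback hi
  rwa [preimage_univ, show pullback i (pullback r φ) = φ from
    funext₂ fun a b => congrArg₂ φ (hri a) (hri b)] at this

lemma h1Trivial_source (hM : H1Trivial (univ : Set M)) (e : OpenPartialHomeomorph X M)
    (he : e.target = univ) : H1Trivial e.source := by
  intro φ hφ
  obtain ⟨c, hc⟩ := hM (pullback e.symm φ) fun z _ =>
    have hz : z ∈ e.target := he ▸ mem_univ z
    (hφ _ (e.map_target hz)).pullback (e.continuousAt_symm hz)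
  refine ⟨c ∘ e, fun x hx => AgreeAt.trans ?_ ((hc (e x) trivial).pullback (e.continuousAt hx))⟩
  exact AgreeAt.of_mem_nhds (e.open_source.mem_nhds hx) fun a ha b hb => by
    simp [pullback, ha, hb]

end Retracts


section FiniteCohomology

/-- Alexander–Spanier `1`-cocycles modulo `2`. Cochains are not identified when they agree near
the diagonal, so this is larger than the usual group of cocycles by coboundaries only. -/
def cocycles (X : Type*) [TopologicalSpace X] : AddSubgroup (Cochain X) where
  carrier := {φ | ∀ x, ExactAt φ x}
  zero_mem' x := VanishesAt.exactAt (AgreeAt.refl 0 x)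
  add_mem' hφ hψ x := (hφ x).add (hψ x)
  neg_mem' {φ} hφ := by rwa [ZModModule.neg_eq_self]

/-- Cochains with a global primitive near the diagonal. -/
def coboundaries (X : Type*) [TopologicalSpace X] : AddSubgroup (Cochain X) where
  carrier := {φ | ExactOn φ univ}
  zero_mem' := exactOn_of_vanishesAt fun x _ => AgreeAt.refl 0 x
  add_mem' hφ hψ := hφ.add hψ
  neg_mem' {φ} hφ := by rwa [ZModModule.neg_eq_self]

/-- The first Alexander–Spanier cohomology group with coefficients in `ℤ/2`. -/
abbrev H1 (X : Type*) [TopologicalSpace X] : Type _ :=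
  cocycles X ⧸ (coboundaries X).addSubgroupOf (cocycles X)

lemma H1.mk_eq_mk_iff {φ ψ : cocycles X} :
    (φ : H1 X) = ψ ↔ ExactOn (φ + ψ : Cochain X) univ := by
  rw [QuotientAddGroup.eq, ZModModule.neg_eq_self]
  rfl

/-- The action of a continuous map on cocycles. -/
def cocyclesMap {f : X → Y} (hf : Continuous f) : cocycles Y →+ cocycles X where
  toFun φ := ⟨pullback f φ, fun x => (φ.2 (f x)).pullback hf.continuousAt⟩
  map_zero' := rfl
  map_add' _ _ := rfl

/-- The map induced on first cohomology by a continuous map. -/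
def H1.map {f : X → Y} (hf : Continuous f) : H1 Y →+ H1 X :=
  QuotientAddGroup.map _ _ (cocyclesMap hf) fun _ hφ => ExactOn.pullback hφ hf

lemma H1.map_injective_of_monotone {f : X → Y} (hc : Continuous f) (hcl : IsClosedMap f)
    (hs : Function.Surjective f) (hm : ∀ y, IsPreconnected (f ⁻¹' {y})) :
    Function.Injective (H1.map hc) := by
  refine fun q q' => Quotient.inductionOn₂' q q' fun φ ψ h => H1.mk_eq_mk_iff.2 ?_
  exact exactOn_of_exactOn_pullback hc hcl hs hm (fun y _ => (φ.2 y).add (ψ.2 y))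
    (H1.mk_eq_mk_iff.1 h)

lemma exactOn_univ_of_finite_closed_cover {ι : Type*} [Finite ι] {K : ι → Set X}
    (hK : ∀ i, IsClosed (K i)) (hcover : ∀ x, ∃ i, x ∈ K i) {φ : Cochain X}
    {d : ι → X → ZMod 2} (hd : ∀ i, ∀ x ∈ K i, HasPrimitiveAt φ (d i) x)
    (hdd : ∀ i j, ∀ x ∈ K i ∩ K j, d i x = d j x) : ExactOn φ univ := by
  choose ι hι using hcover
  refine ⟨fun x => d (ι x) x, fun x _ => (hd _ x (hι x)).congr ?_⟩
  have hnear : ∀ i, ∀ᶠ a in 𝓝 x, a ∈ K i → d (ι x) a = d i a := by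
    intro i
    by_cases hx : x ∈ K i
    · filter_upwards [(hd _ x (hι x)).eventually_add_eq (hd i x hx)] with a ha _
      rw [hdd _ _ x ⟨hι x, hx⟩, CharTwo.add_self_eq_zero] at ha
      exact CharTwo.add_eq_zero.1 ha
    · filter_upwards [(hK i).isOpen_compl.mem_nhds hx] with a ha ha' using (ha ha').elim
  filter_upwards [eventually_all.2 hnear] with a ha using ha _ (hι a)

lemma exists_finite_connectedComponentIn_cover [LocallyConnectedSpace X] {K W : Set X}
    (hK : IsCompact K) (hW : IsOpen W) (hKW : K ⊆ W) :
    ∃ B : Finset X, ↑B ⊆ W ∧ K ⊆ ⋃ b ∈ B, connectedComponentIn W b := by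
  obtain ⟨B, hBK, hB⟩ := hK.elim_nhds_subcover (connectedComponentIn W) fun x hx =>
    connectedComponentIn_mem_nhds (hW.mem_nhds (hKW hx))
  exact ⟨B, fun b hb => hKW (hBK b hb), hB⟩

lemma eqOn_of_eqOn_finset {φ : Cochain X} {c d : X → ZMod 2} {K W : Set X} {B : Finset X}
    (hBW : ↑B ⊆ W) (hKB : K ⊆ ⋃ b ∈ B, connectedComponentIn W b)
    (hc : ∀ x ∈ W, HasPrimitiveAt φ c x) (hd : ∀ x ∈ W, HasPrimitiveAt φ d x)
    (hB : ∀ b ∈ B, c b = d b) : EqOn c d K := by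
  intro x hx
  obtain ⟨b, hb, hxb⟩ := mem_iUnion₂.1 (hKB hx)
  have hsub := connectedComponentIn_subset W b
  have := eq_of_isPreconnected (c := c + d) isPreconnected_connectedComponentIn
    (fun y hy => (hc y (hsub hy)).eventually_add_eq (hd y (hsub hy))) hxb
    (mem_connectedComponentIn (hBW hb))
  simp only [Pi.add_apply, hB b hb, CharTwo.add_self_eq_zero] at this
  exact CharTwo.add_eq_zero.1 this

lemma exists_finite_closed_refinement [CompactSpace X] [NormalSpace X] {U : X → Set X}
    (hUo : ∀ x, IsOpen (U x)) (hUx : ∀ x, x ∈ U x) :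
    ∃ (t : Finset X) (K : t → Set X), (∀ i, IsClosed (K i)) ∧ (∀ i, K i ⊆ U i) ∧
      ∀ x, ∃ i, x ∈ K i := by
  obtain ⟨t, ht⟩ := CompactSpace.elim_nhds_subcover U fun x => (hUo x).mem_nhds (hUx x)
  obtain ⟨K, hKcover, hK, hKU⟩ := exists_iUnion_eq_closed_subset (u := fun i : t => U i)
    (fun i => hUo i) (fun x => toFinite _) (by simpa [iUnion_subtype] using ht)
  exact ⟨t, K, hK, hKU, iUnion_eq_univ_iff.1 hKcover⟩

-- On a finite cover by cohomologically trivial sets, a class is determined by the differences of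
-- the primitives of a representative at finitely many points of the overlaps.
lemma finite_H1 [CompactSpace X] [NormalSpace X] [LocallyConnectedSpace X]
    (hX : ∀ x : X, ∃ U, IsOpen U ∧ x ∈ U ∧ H1Trivial U) : Finite (H1 X) := by
  choose U hUo hUx hU using hX
  obtain ⟨t, K, hK, hKU, hKcover⟩ := exists_finite_closed_refinement hUo hUx
  have hB (i j : t) := exists_finite_connectedComponentIn_cover
    ((hK i).inter (hK j)).isCompact ((hUo i).inter (hUo j)) (inter_subset_inter (hKU i) (hKU j))
  choose B hBU hBK using hB
  choose c hc using fun (φ : cocycles X) (i : X) => hU i φ fun x _ => φ.2 x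
  refine Finite.of_injective (β := ∀ i j : t, B i j → ZMod 2)
    (fun q i j b => c q.out i b + c q.out j b) fun q q' hqq' => ?_
  rw [← q.out_eq', ← q'.out_eq']
  refine H1.mk_eq_mk_iff.2 (exactOn_univ_of_finite_closed_cover hK hKcover
    (d := fun i => c q.out i + c q'.out i)
    (fun i x hx => (hc _ i x (hKU i hx)).add (hc _ i x (hKU i hx))) fun i j => ?_)
  refine eqOn_of_eqOn_finset (φ := q.out + q'.out) (hBU i j) (hBK i j)
    (fun x hx => (hc _ i x hx.1).add (hc _ i x hx.1))
    (fun x hx => (hc _ j x hx.2).add (hc _ j x hx.2)) fun b hb => ?_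
  have := congrFun₃ hqq' i j ⟨b, hb⟩
  simp only [Pi.add_apply] at this ⊢
  grind

-- `f` followed by a homeomorphism `Y ≃ₜ X` acts injectively on the finite group `H1 X`, hence
-- surjectively.
lemma exists_cocycle_pullback_cohomologous [CompactSpace X] [T2Space X] [LocallyConnectedSpace X]
    (hX : ∀ x : X, ∃ U, IsOpen U ∧ x ∈ U ∧ H1Trivial U) (g : X ≃ₜ Y) {f : X → Y}
    (hc : Continuous f) (hs : Function.Surjective f) (hm : ∀ y, IsPreconnected (f ⁻¹' {y}))
    {φ : Cochain X} (hφ : ∀ x, ExactAt φ x) :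
    ∃ ψ : Cochain Y, (∀ y, ExactAt ψ y) ∧ ExactOn (φ + pullback f ψ) univ := by
  have hη : Continuous (g.symm ∘ f) := g.symm.continuous.comp hc
  have hηm : ∀ x, IsPreconnected ((g.symm ∘ f) ⁻¹' {x}) := fun x => by
    rw [preimage_comp, ← g.image_eq_preimage_symm, image_singleton]
    exact hm (g x)
  have := finite_H1 hX
  obtain ⟨q, hq⟩ := Finite.injective_iff_surjective.1
    (H1.map_injective_of_monotone hη hη.isClosedMap (g.symm.surjective.comp hs) hηm)
    (⟨φ, hφ⟩ : cocycles X)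
  induction q using Quotient.inductionOn' with | h ψ =>
  exact ⟨pullback g.symm ψ, fun y => (ψ.2 _).pullback g.symm.continuous.continuousAt,
    H1.mk_eq_mk_iff.1 hq.symm⟩

end FiniteCohomology

end Cochain

section HalfPlane

/-- The closed upper half-plane, as a model for surfaces with boundary. -/
abbrev HalfPlane := {z : ℂ // 0 ≤ z.im}

namespace HalfPlane

/-- The retraction of the plane onto the closed upper half-plane. -/
def retract (z : ℂ) : HalfPlane := ⟨z.re + (max z.im 0 : ℝ) * Complex.I, by simp⟩

@[fun_prop]
lemma continuous_retract : Continuous retract := by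
  unfold retract
  fun_prop

@[simp]
lemma coe_retract {z : ℂ} (hz : 0 ≤ z.im) : (retract z : ℂ) = z := by
  simp [retract, max_eq_left hz]

lemma leftInverse_retract : Function.LeftInverse retract Subtype.val :=
  fun z => Subtype.ext (coe_retract z.2)

end HalfPlane

namespace Cochain

lemma h1Trivial_univ_complex : H1Trivial (univ : Set ℂ) :=
  h1Trivial_of_starConvex (x₀ := 0) isOpen_univ (starConvex_univ _)

lemma h1Trivial_univ_halfPlane : H1Trivial (univ : Set HalfPlane) :=
  h1Trivial_univ_of_leftInverse HalfPlane.continuous_retract continuous_subtype_val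
    HalfPlane.leftInverse_retract h1Trivial_univ_complex

end Cochain

end HalfPlane

section ManifoldInterior

lemma mem_manifoldInterior_iff {x : X} :
    x ∈ manifoldInterior X ↔ ∃ e : OpenPartialHomeomorph X ℂ, x ∈ e.source ∧ e.target = univ := by
  let L : ℂ ≃ₜ EuclideanSpace ℝ (Fin 2) := Complex.orthonormalBasisOneI.repr.toHomeomorph
  constructor
  · rintro ⟨U, hU, hx, ⟨φ⟩⟩
    let i := (⟨U, hU⟩ : TopologicalSpace.Opens X).openPartialHomeomorphSubtypeCoe ⟨⟨x, hx⟩⟩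
    exact ⟨i.symm.transHomeomorph (φ.trans L.symm), by simpa [i] using hx, by simp [i]⟩
  · rintro ⟨e, hx, he⟩
    exact ⟨e.source, e.open_source, hx, ⟨(e.toHomeomorphSourceTarget.trans
      ((Homeomorph.setCongr he).trans (Homeomorph.Set.univ ℂ))).trans L⟩⟩

lemma exists_chart_subset_of_forall_nhds {H : Type*} [TopologicalSpace H]
    (e : OpenPartialHomeomorph X H) {x : X} (hx : x ∈ e.source) {q : H}
    (hH : ∀ W ∈ 𝓝 (e x), ∃ b : OpenPartialHomeomorph H H,
      b.target = univ ∧ e x ∈ b.source ∧ b (e x) = q ∧ b.source ⊆ W) {G : Set X} (hG : G ∈ 𝓝 x) :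
    ∃ e' : OpenPartialHomeomorph X H,
      e'.target = univ ∧ x ∈ e'.source ∧ e' x = q ∧ e'.source ⊆ G := by
  let e₁ := e.restrOpen (interior G) isOpen_interior
  have hx₁ : x ∈ e₁.source := ⟨hx, mem_interior_iff_mem_nhds.2 hG⟩
  obtain ⟨b, hbt, hxb, hbx, hbs⟩ := hH e₁.target (e₁.open_target.mem_nhds (e₁.map_source hx₁))
  refine ⟨e₁.trans b, ?_, ?_, hbx, ?_⟩
  · rw [OpenPartialHomeomorph.trans_target, hbt, univ_inter, eq_univ_iff_forall]
    exact fun z => hbs (b.map_target (hbt ▸ mem_univ z))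
  · rw [OpenPartialHomeomorph.trans_source]
    exact ⟨hx₁, hxb⟩
  · rw [OpenPartialHomeomorph.trans_source]
    exact fun y hy => interior_subset hy.1.2

lemma exists_centered_chart_subset {E : Type*} [NormedAddCommGroup E] [NormedSpace ℝ E]
    (e : OpenPartialHomeomorph X E) {x : X} (hx : x ∈ e.source) {G : Set X} (hG : G ∈ 𝓝 x) :
    ∃ e' : OpenPartialHomeomorph X E,
      e'.target = univ ∧ x ∈ e'.source ∧ e' x = 0 ∧ e'.source ⊆ G := by
  refine exists_chart_subset_of_forall_nhds e hx (fun W hW => ?_) hG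
  obtain ⟨r, hr, hball⟩ := Metric.mem_nhds_iff.1 hW
  have hs := OpenPartialHomeomorph.univBall_target (e x) hr
  exact ⟨(OpenPartialHomeomorph.univBall (e x) r).symm, OpenPartialHomeomorph.univBall_source _ _,
    hs.ge (Metric.mem_ball_self hr), OpenPartialHomeomorph.univBall_symm_apply_center (e x) r,
    hs.trans_subset hball⟩

lemma exists_disc_chart {x : X} (hx : x ∈ manifoldInterior X) {G : Set X} (hG : G ∈ 𝓝 x) :
    ∃ e : OpenPartialHomeomorph X ℂ, e.target = univ ∧ x ∈ e.source ∧ e x = 0 ∧ e.source ⊆ G := by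
  obtain ⟨e, hx, -⟩ := mem_manifoldInterior_iff.1 hx
  exact exists_centered_chart_subset e hx hG

lemma source_subset_manifoldInterior (e : OpenPartialHomeomorph X ℂ) :
    e.source ⊆ manifoldInterior X := fun _ hx =>
  let ⟨e', he', hx', _⟩ := exists_centered_chart_subset e hx univ_mem
  mem_manifoldInterior_iff.2 ⟨e', hx', he'⟩

lemma isOpen_manifoldInterior : IsOpen (manifoldInterior X) := by
  refine isOpen_iff_mem_nhds.2 fun x hx => ?_
  obtain ⟨e, hx, -⟩ := mem_manifoldInterior_iff.1 hx
  exact mem_of_superset (e.open_source.mem_nhds hx) (source_subset_manifoldInterior e)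

end ManifoldInterior

namespace Cochain

section Residue

variable {φ ψ : Cochain X} {c : X → ZMod 2} {x : X}

/-- A point is removable for `φ` if `φ` has a primitive in a punctured neighbourhood of it. -/
def RemovableAt (φ : Cochain X) (x : X) : Prop := ∃ c, ∀ᶠ y in 𝓝[≠] x, HasPrimitiveAt φ c y

lemma ExactAt.removableAt (h : ExactAt φ x) : RemovableAt φ x :=
  h.imp fun _ hc => hc.eventually.filter_mono nhdsWithin_le_nhds

lemma RemovableAt.add (h : RemovableAt φ x) (h' : RemovableAt ψ x) : RemovableAt (φ + ψ) x := by
  obtain ⟨c, hc⟩ := h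
  obtain ⟨d, hd⟩ := h'
  exact ⟨c + d, by filter_upwards [hc, hd] with y hy hy' using hy.add hy'⟩

lemma RemovableAt.add_iff_right (h : RemovableAt φ x) :
    RemovableAt (φ + ψ) x ↔ RemovableAt ψ x := by
  refine ⟨fun h' => ?_, h.add⟩
  simpa only [← add_assoc, ZModModule.add_self, zero_add] using h.add h'

lemma RemovableAt.congr (h : ∀ᶠ y in 𝓝[≠] x, AgreeAt φ ψ y) (hψ : RemovableAt ψ x) :
    RemovableAt φ x :=
  hψ.imp fun _ hc => by filter_upwards [h, hc] with y hy hy' using hy.trans hy'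

open Classical in
/-- The residue of a cochain at an isolated singularity in the interior of a surface. -/
noncomputable def residue (φ : Cochain X) (x : X) : ZMod 2 := if RemovableAt φ x then 0 else 1

lemma residue_eq_zero_iff : residue φ x = 0 ↔ RemovableAt φ x := by
  simp [residue]

lemma residue_eq_of_iff {ψ : Cochain Y} {y : Y} (h : RemovableAt φ x ↔ RemovableAt ψ y) :
    residue φ x = residue ψ y := by
  classical
  exact if_congr h rfl rfl

lemma ExactAt.residue_eq_zero (h : ExactAt φ x) : residue φ x = 0 :=
  residue_eq_zero_iff.2 h.removableAt

lemma AgreeAt.residue_eq (h : AgreeAt φ ψ x) : residue φ x = residue ψ x :=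
  residue_eq_of_iff
    ⟨.congr (h.symm.eventually.filter_mono nhdsWithin_le_nhds),
      .congr (h.eventually.filter_mono nhdsWithin_le_nhds)⟩

end Residue

section Charts

variable (e : OpenPartialHomeomorph X Y) {x : X} {y : Y}

lemma tendsto_nhdsNE_of_mem_source (hx : x ∈ e.source) : Tendsto e (𝓝[≠] x) (𝓝[≠] e x) := by
  refine tendsto_nhdsWithin_iff.2 ⟨(e.continuousAt hx).tendsto.mono_left nhdsWithin_le_nhds, ?_⟩
  filter_upwards [mem_nhdsWithin_of_mem_nhds (e.open_source.mem_nhds hx), self_mem_nhdsWithin]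
    with y hy hne heq
  exact hne (e.injOn hy hx heq)

lemma agreeAt_pullback_pullback_symm (φ : Cochain X) (hx : x ∈ e.source) :
    AgreeAt (pullback e (pullback e.symm φ)) φ x :=
  .of_mem_nhds (e.open_source.mem_nhds hx) fun a ha b hb => by simp [pullback, ha, hb]

lemma RemovableAt.pullback_chart {φ : Cochain Y} (hx : x ∈ e.source) (h : RemovableAt φ (e x)) :
    RemovableAt (pullback e φ) x := by
  obtain ⟨c, hc⟩ := h
  refine ⟨c ∘ e, ?_⟩
  filter_upwards [(tendsto_nhdsNE_of_mem_source e hx).eventually hc,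
    mem_nhdsWithin_of_mem_nhds (e.open_source.mem_nhds hx)] with y hy hys
  exact hy.pullback (e.continuousAt hys)

lemma residue_pullback (φ : Cochain Y) (hx : x ∈ e.source) :
    residue (pullback e φ) x = residue φ (e x) := by
  refine residue_eq_of_iff ⟨fun h => ?_, .pullback_chart e hx⟩
  have hx' : e x ∈ e.symm.source := e.map_source hx
  rw [← e.left_inv hx] at h
  exact (h.pullback_chart e.symm hx').congr <|
    (agreeAt_pullback_pullback_symm e.symm φ hx').symm.eventually.filter_mono nhdsWithin_le_nhds

lemma exactAt_pullback_symm_iff {φ : Cochain X} (hy : y ∈ e.target) :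
    ExactAt (pullback e.symm φ) y ↔ ExactAt φ (e.symm y) := by
  refine ⟨fun h => ?_, fun h => h.pullback (e.symm.continuousAt hy)⟩
  rw [← e.right_inv hy] at h
  exact (agreeAt_pullback_pullback_symm e φ (e.map_target hy)).symm.exactAt
    (h.pullback (e.continuousAt (e.map_target hy)))

end Charts

section ResidueAdd

lemma exists_primitives_slitPlane {φ : Cochain ℂ} {r : ℝ} (hr : 0 < r)
    (h : ∀ z ∈ Metric.ball (0 : ℂ) r, z ≠ 0 → ExactAt φ z) :
    ∃ c d, (∀ z ∈ Metric.ball 0 r ∩ Complex.slitPlane, HasPrimitiveAt φ c z) ∧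
      ∀ z ∈ Metric.ball 0 r ∩ -Complex.slitPlane, HasPrimitiveAt φ d z := by
  have hst : StarConvex ℝ ((r / 2 : ℝ) : ℂ) (Metric.ball 0 r ∩ Complex.slitPlane) :=
    ((convex_ball (0 : ℂ) r).starConvex (by simp [abs_of_pos hr, hr])).inter
      (Complex.starConvex_ofReal_slitPlane (by positivity))
  have hst' : StarConvex ℝ (-((r / 2 : ℝ) : ℂ)) (Metric.ball 0 r ∩ -Complex.slitPlane) := by
    simpa using hst.neg
  obtain ⟨c, hc⟩ := h1Trivial_of_starConvex (Metric.isOpen_ball.inter Complex.isOpen_slitPlane) hst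
    φ fun z hz => h z hz.1 (Complex.slitPlane_ne_zero hz.2)
  obtain ⟨d, hd⟩ := h1Trivial_of_starConvex
    (Metric.isOpen_ball.inter Complex.isOpen_slitPlane.neg) hst'
    φ fun z hz => h z hz.1 (neg_ne_zero.1 (Complex.slitPlane_ne_zero hz.2))
  exact ⟨c, d, hc, hd⟩

lemma removableAt_of_primitives_slitPlane {φ : Cochain ℂ} {r : ℝ} (hr : 0 < r)
    {c d : ℂ → ZMod 2} (hc : ∀ z ∈ Metric.ball 0 r ∩ Complex.slitPlane, HasPrimitiveAt φ c z)
    (hd : ∀ z ∈ Metric.ball 0 r ∩ -Complex.slitPlane, HasPrimitiveAt φ d z) {k : ZMod 2}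
    (hk : ∀ z ∈ Metric.ball (0 : ℂ) r, z.im ≠ 0 → c z + d z = k) : RemovableAt φ 0 := by
  obtain ⟨b, hb⟩ := exactOn_union_of_add_eq_const (k := k)
    (Metric.isOpen_ball.inter Complex.isOpen_slitPlane)
    (Metric.isOpen_ball.inter Complex.isOpen_slitPlane.neg) hc hd fun z hz => hk z hz.1.1 <| by
      have h₁ := Complex.mem_slitPlane_iff.1 hz.1.2
      have h₂ := Complex.mem_slitPlane_iff.1 hz.2.2
      simp only [Complex.neg_re, Complex.neg_im] at h₂
      grind
  refine ⟨b, ?_⟩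
  filter_upwards [mem_nhdsWithin_of_mem_nhds (Metric.ball_mem_nhds (0 : ℂ) hr),
    self_mem_nhdsWithin] with z hz hz0
  exact hb z ((Complex.mem_slitPlane_or_neg_mem_slitPlane hz0).imp (⟨hz, ·⟩) (⟨hz, ·⟩))

lemma exists_primitives_slitPlane_of_not_removableAt {φ : Cochain ℂ} {r : ℝ} (hr : 0 < r)
    (h : ∀ z ∈ Metric.ball (0 : ℂ) r, z ≠ 0 → ExactAt φ z) (h0 : ¬ RemovableAt φ 0) :
    ∃ c d k, (∀ z ∈ Metric.ball 0 r ∩ Complex.slitPlane, HasPrimitiveAt φ c z) ∧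
      (∀ z ∈ Metric.ball 0 r ∩ -Complex.slitPlane, HasPrimitiveAt φ d z) ∧
      ∀ z ∈ Metric.ball (0 : ℂ) r, z.im ≠ 0 → c z + d z = k + if 0 < z.im then 1 else 0 := by
  obtain ⟨c, d, hc, hd⟩ := exists_primitives_slitPlane hr h
  have hcd : ∀ S ⊆ {z : ℂ | z.im ≠ 0}, Convex ℝ S → ∃ k, ∀ z ∈ Metric.ball 0 r ∩ S,
      c z + d z = k := fun S hS hconv =>
    exists_primitive_add_eq_const ((convex_ball (0 : ℂ) r).inter hconv).isPreconnected
      (fun z hz => hc z ⟨hz.1, Complex.mem_slitPlane_iff.2 (.inr (hS hz.2))⟩)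
      fun z hz => hd z ⟨hz.1, Complex.mem_slitPlane_iff.2 (.inr (by simpa using hS hz.2))⟩
  obtain ⟨kp, hkp⟩ := hcd {z | 0 < z.im} (fun z hz => ne_of_gt hz) (convex_halfSpace_im_gt 0)
  obtain ⟨km, hkm⟩ := hcd {z | z.im < 0} (fun z hz => ne_of_lt hz) (convex_halfSpace_im_lt 0)
  have hne : kp ≠ km := by
    rintro rfl
    exact h0 <| removableAt_of_primitives_slitPlane hr hc hd fun z hz him =>
      him.lt_or_gt.elim (fun hlt => hkm z ⟨hz, hlt⟩) fun hgt => hkp z ⟨hz, hgt⟩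
  have hkpm : kp = km + 1 := (by decide : ∀ k l : ZMod 2, k ≠ l → k = l + 1) kp km hne
  refine ⟨c, d, km, hc, hd, fun z hz him => ?_⟩
  split_ifs with hpos
  · exact hkpm ▸ hkp z ⟨hz, hpos⟩
  · simpa using hkm z ⟨hz, him.lt_of_le (not_lt.1 hpos)⟩

lemma removableAt_zero_add {φ ψ : Cochain ℂ} (hφ : ∀ᶠ z in 𝓝[≠] 0, ExactAt φ z)
    (hψ : ∀ᶠ z in 𝓝[≠] 0, ExactAt ψ z) (hφ0 : ¬ RemovableAt φ 0) (hψ0 : ¬ RemovableAt ψ 0) :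
    RemovableAt (φ + ψ) 0 := by
  obtain ⟨r, hr, h⟩ := Metric.eventually_nhds_iff_ball.1
    (eventually_nhdsWithin_iff.1 (hφ.and hψ))
  obtain ⟨c, d, k, hc, hd, hk⟩ := exists_primitives_slitPlane_of_not_removableAt hr
    (fun z hz hz0 => (h z hz hz0).1) hφ0
  obtain ⟨c', d', k', hc', hd', hk'⟩ := exists_primitives_slitPlane_of_not_removableAt hr
    (fun z hz hz0 => (h z hz hz0).2) hψ0
  refine removableAt_of_primitives_slitPlane (k := k + k') hr
    (fun z hz => (hc z hz).add (hc' z hz)) (fun z hz => (hd z hz).add (hd' z hz)) fun z hz him => ?_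
  rw [Pi.add_apply, Pi.add_apply, add_add_add_comm, hk z hz him, hk' z hz him, add_add_add_comm,
    CharTwo.add_self_eq_zero, add_zero]

lemma residue_add {φ ψ : Cochain X} {x : X} (hx : x ∈ manifoldInterior X)
    (hφ : ∀ᶠ z in 𝓝[≠] x, ExactAt φ z) (hψ : ∀ᶠ z in 𝓝[≠] x, ExactAt ψ z) :
    residue (φ + ψ) x = residue φ x + residue ψ x := by
  by_cases hφx : RemovableAt φ x
  · rw [residue_eq_zero_iff.2 hφx, zero_add, residue_eq_of_iff hφx.add_iff_right]
  by_cases hψx : RemovableAt ψ x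
  · rw [residue_eq_zero_iff.2 hψx, add_zero, add_comm φ, residue_eq_of_iff hψx.add_iff_right]
  obtain ⟨e, he, hxe, hx0, -⟩ := exists_disc_chart hx univ_mem
  have hes : ∀ z, z ∈ e.symm.source := fun z => e.symm_source ▸ he ▸ mem_univ z
  have hsx : e.symm 0 = x := by rw [← hx0, e.left_inv hxe]
  have htendsto : Tendsto e.symm (𝓝[≠] 0) (𝓝[≠] x) :=
    hsx ▸ tendsto_nhdsNE_of_mem_source e.symm (hes 0)
  have hexact : ∀ {χ : Cochain X}, (∀ᶠ z in 𝓝[≠] x, ExactAt χ z) →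
      ∀ᶠ z in 𝓝[≠] 0, ExactAt (pullback e.symm χ) z := fun h =>
    (htendsto.eventually h).mono fun z hz => hz.pullback (e.symm.continuousAt (hes z))
  have hrem : ∀ χ : Cochain X, RemovableAt χ x ↔ RemovableAt (pullback e.symm χ) 0 := fun χ => by
    rw [← residue_eq_zero_iff, ← residue_eq_zero_iff, residue_pullback e.symm χ (hes 0), hsx]
  have hadd : RemovableAt (φ + ψ) x := (hrem _).2 <|
    removableAt_zero_add (hexact hφ) (hexact hψ) ((hrem φ).not.1 hφx) ((hrem ψ).not.1 hψx)
  rw [residue_eq_zero_iff.2 hadd, residue, residue, if_neg hφx, if_neg hψx,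
    CharTwo.add_self_eq_zero]

end ResidueAdd

section Meromorphic

variable {φ ψ : Cochain X}

/-- Cochains on a surface that are locally exact up to finitely many singularities, all of them in
the interior. -/
structure IsMeromorphic (φ : Cochain X) : Prop where
  finite_singularities : {x | ¬ ExactAt φ x}.Finite
  mem_manifoldInterior : ∀ x, ¬ ExactAt φ x → x ∈ manifoldInterior X

/-- The sum of all residues; a finite sum for meromorphic cochains. -/
noncomputable def totalResidue (φ : Cochain X) : ZMod 2 := ∑ᶠ x, residue φ x

lemma isMeromorphic_of_forall_exactAt (h : ∀ x, ExactAt φ x) : IsMeromorphic φ :=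
  ⟨by simp [h], fun x hx => (hx (h x)).elim⟩

lemma IsMeromorphic.eventually_exactAt [T1Space X] (h : IsMeromorphic φ) (x : X) :
    ∀ᶠ z in 𝓝[≠] x, ExactAt φ z :=
  (eventually_cofinite.2 h.finite_singularities).filter_mono (nhdsNE_le_cofinite x)

lemma IsMeromorphic.add (hφ : IsMeromorphic φ) (hψ : IsMeromorphic ψ) : IsMeromorphic (φ + ψ) := by
  have h : ∀ x, ¬ ExactAt (φ + ψ) x → ¬ ExactAt φ x ∨ ¬ ExactAt ψ x := fun x => by
    contrapose!
    exact fun h => h.1.add h.2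
  exact ⟨(hφ.finite_singularities.union hψ.finite_singularities).subset h,
    fun x hx => (h x hx).elim (hφ.mem_manifoldInterior x) (hψ.mem_manifoldInterior x)⟩

lemma IsMeromorphic.residue_add [T1Space X] (hφ : IsMeromorphic φ) (hψ : IsMeromorphic ψ) (x : X) :
    residue (φ + ψ) x = residue φ x + residue ψ x := by
  by_cases hx : x ∈ manifoldInterior X
  · exact Cochain.residue_add hx (hφ.eventually_exactAt x) (hψ.eventually_exactAt x)
  · have hφx : ExactAt φ x := not_not.1 (mt (hφ.mem_manifoldInterior x) hx)
    have hψx : ExactAt ψ x := not_not.1 (mt (hψ.mem_manifoldInterior x) hx)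
    rw [hφx.residue_eq_zero, hψx.residue_eq_zero, (hφx.add hψx).residue_eq_zero, add_zero]

lemma IsMeromorphic.finite_support_residue (h : IsMeromorphic φ) :
    (Function.support (residue φ)).Finite :=
  h.finite_singularities.subset fun _ hx h => hx h.residue_eq_zero

lemma IsMeromorphic.totalResidue_add [T1Space X] (hφ : IsMeromorphic φ) (hψ : IsMeromorphic ψ) :
    totalResidue (φ + ψ) = totalResidue φ + totalResidue ψ := by
  rw [totalResidue, totalResidue, totalResidue, ← finsum_add_distrib hφ.finite_support_residue
    hψ.finite_support_residue]
  exact finsum_congr (hφ.residue_add hψ)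

end Meromorphic

section Cutoff

variable {N : Set X} {φ : Cochain X} {x : X}

open Classical in
/-- The cochain that agrees with `φ` on pairs of points of `N` and vanishes on other pairs. -/
noncomputable def cutoff (N : Set X) (φ : Cochain X) : Cochain X :=
  fun a b => if a ∈ N ∧ b ∈ N then φ a b else 0

lemma agreeAt_cutoff (hN : N ∈ 𝓝 x) (φ : Cochain X) : AgreeAt (cutoff N φ) φ x :=
  .of_mem_nhds hN fun _ ha _ hb => if_pos ⟨ha, hb⟩

lemma VanishesAt.cutoff (h : VanishesAt φ x) : VanishesAt (cutoff N φ) x := by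
  filter_upwards [h] with p hp
  simp [Cochain.cutoff, hp]

lemma vanishesAt_cutoff (h : x ∈ closure N → VanishesAt φ x) : VanishesAt (cutoff N φ) x := by
  by_cases hx : x ∈ closure N
  · exact (h hx).cutoff
  · exact .of_mem_nhds (isClosed_closure.isOpen_compl.mem_nhds hx) fun a ha _ _ =>
      if_neg fun h => ha (subset_closure h.1)

lemma RemovableAt.exists_exactAt [RegularSpace X] (h : RemovableAt φ x) :
    ∃ φ', ExactAt φ' x ∧ ∀ y ≠ x, AgreeAt φ' φ y := by
  obtain ⟨c, hc⟩ := h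
  obtain ⟨K, hK, hKc, hKV⟩ := exists_mem_nhds_isClosed_subset (eventually_nhdsWithin_iff.1 hc)
  refine ⟨cutoff K (φ + coboundary c) + φ, ⟨c, ?_⟩, fun y hy => agreeAt_add_right_iff.2 ?_⟩
  · have := AgreeAt.add (agreeAt_cutoff hK (φ + coboundary c)) (.refl φ x)
    rwa [add_right_comm, ZModModule.add_self, zero_add] at this
  · exact vanishesAt_cutoff fun hyK => vanishesAt_add_iff.2 (hKV (hKc.closure_eq ▸ hyK) hy)

lemma exists_exactAt_of_forall_removableAt [RegularSpace X] {S : Set X} (hS : S.Finite)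
    (h : ∀ p ∈ S, RemovableAt φ p) :
    ∃ φ', (∀ p ∈ S, ExactAt φ' p) ∧ ∀ x ∉ S, AgreeAt φ' φ x := by
  induction S, hS using Set.Finite.induction_on with
  | empty => exact ⟨φ, by simp, fun x _ => .refl φ x⟩
  | @insert p S hp _ ih =>
    obtain ⟨φ', hexact, hagree⟩ := ih fun q hq => h q (mem_insert_of_mem _ hq)
    obtain ⟨φ'', hexact', hagree'⟩ := RemovableAt.exists_exactAt <|
      (h p (mem_insert _ _)).congr ((hagree p hp).eventually.filter_mono nhdsWithin_le_nhds)
    refine ⟨φ'', ?_, fun x hx => ?_⟩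
    · rintro q (rfl | hq)
      · exact hexact'
      · exact (hagree' q (ne_of_mem_of_not_mem hq hp)).exactAt (hexact q hq)
    · rw [mem_insert_iff, not_or] at hx
      exact (hagree' x hx.1).trans (hagree x hx.2)

end Cutoff

section Extension

variable {e : OpenPartialHomeomorph X Y} {ψ : Cochain Y} {φ : Cochain X} {x : X}

/-- `φ` is the extension by zero of the cochain `ψ`, transported to the source of a chart `e`. -/
structure IsExtension (e : OpenPartialHomeomorph X Y) (ψ : Cochain Y) (φ : Cochain X) : Prop where
  agreeAt : ∀ x ∈ e.source, AgreeAt φ (pullback e ψ) x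
  vanishesAt_of_notMem : ∀ x ∉ e.source, VanishesAt φ x

lemma exists_isExtension [T4Space X] (e : OpenPartialHomeomorph X Y) {K : Set Y} (hK : IsCompact K)
    (hKe : K ⊆ e.target) (hψ : ∀ z ∉ K, VanishesAt ψ z) : ∃ φ, IsExtension e ψ φ := by
  have hK' : IsCompact (e.symm '' K) := hK.image_of_continuousOn (e.continuousOn_symm.mono hKe)
  have hsub : e.symm '' K ⊆ e.source := by
    rintro _ ⟨z, hz, rfl⟩
    exact e.map_target (hKe hz)
  obtain ⟨N, hN, hKN, hNe⟩ := normal_exists_closure_subset hK'.isClosed e.open_source hsub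
  have hout : ∀ x ∈ e.source, e x ∉ K → VanishesAt (pullback e ψ) x := fun x hx hxK =>
    (hψ _ hxK).pullback (e.continuousAt hx)
  have hcut : ∀ x, (x ∈ e.source → e x ∉ K) → VanishesAt (cutoff N (pullback e ψ)) x :=
    fun x hx => vanishesAt_cutoff fun hxN => hout x (hNe hxN) (hx (hNe hxN))
  refine ⟨cutoff N (pullback e ψ), fun x hx => ?_, fun x hx => hcut x fun h => (hx h).elim⟩
  by_cases hxK : e x ∈ K
  · exact agreeAt_cutoff (hN.mem_nhds (hKN ⟨e x, hxK, e.left_inv hx⟩)) _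
  · exact (hcut x fun _ => hxK).trans (hout x hx hxK).symm

lemma IsExtension.vanishesAt (h : IsExtension e ψ φ) (hx : x ∈ e.source → VanishesAt ψ (e x)) :
    VanishesAt φ x := by
  by_cases hxe : x ∈ e.source
  · exact (h.agreeAt x hxe).trans ((hx hxe).pullback (e.continuousAt hxe))
  · exact h.vanishesAt_of_notMem x hxe

lemma IsExtension.exactAt (h : IsExtension e ψ φ) (hx : x ∈ e.source → ExactAt ψ (e x)) :
    ExactAt φ x := by
  by_cases hxe : x ∈ e.source
  · exact (h.agreeAt x hxe).exactAt ((hx hxe).pullback (e.continuousAt hxe))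
  · exact (h.vanishesAt_of_notMem x hxe).exactAt

lemma IsExtension.residue_eq (h : IsExtension e ψ φ) (hx : x ∈ e.source) :
    residue φ x = residue ψ (e x) := by
  rw [(h.agreeAt x hx).residue_eq, residue_pullback e ψ hx]

lemma IsExtension.residue_eq_zero (h : IsExtension e ψ φ) (hx : x ∉ e.source) :
    residue φ x = 0 :=
  (h.vanishesAt_of_notMem x hx).exactAt.residue_eq_zero

lemma IsExtension.isMeromorphic (h : IsExtension e ψ φ) (hψ : IsMeromorphic ψ) :
    IsMeromorphic φ := by
  have hsing : ∀ x, ¬ ExactAt φ x → x ∈ e.source ∧ ¬ ExactAt ψ (e x) := fun x hx => by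
    contrapose! hx
    exact h.exactAt hx
  refine ⟨.subset (hψ.finite_singularities.image e.symm) fun x hx => ?_, fun x hx => ?_⟩
  · exact ⟨e x, (hsing x hx).2, e.left_inv (hsing x hx).1⟩
  · obtain ⟨e', hxe', -⟩ := mem_manifoldInterior_iff.1 (hψ.mem_manifoldInterior _ (hsing x hx).2)
    refine source_subset_manifoldInterior (e.trans e') ?_
    rw [OpenPartialHomeomorph.trans_source]
    exact ⟨(hsing x hx).1, hxe'⟩

lemma IsExtension.totalResidue_eq (h : IsExtension e ψ φ) (he : e.target = univ) :
    totalResidue φ = totalResidue ψ := by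
  have hsupp : Function.support (residue φ) ⊆ e.source :=
    Function.support_subset_iff'.2 fun x hx => h.residue_eq_zero hx
  calc totalResidue φ = ∑ᶠ x ∈ e.source, residue φ x := by
        rw [totalResidue, ← finsum_mem_univ]
        exact finsum_mem_inter_support_eq' _ _ _ fun x hx => by simp [hsupp hx]
    _ = ∑ᶠ y ∈ univ, residue ψ y :=
        finsum_mem_eq_of_bijOn e (he ▸ e.bijOn) fun x hx => h.residue_eq hx
    _ = totalResidue ψ := finsum_mem_univ _

end Extension


section RayCochain

open Metric

open Classical in
/-- The indicator of the half-plane above the horizontal line through `p`. -/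
noncomputable def aboveIndicator (p z : ℂ) : ZMod 2 := if p.im < z.im then 1 else 0

/-- A cochain on the plane with a single singularity `p`, supported on the horizontal ray going
left from `p`. -/
noncomputable def rayCochain (p : ℂ) : Cochain ℂ :=
  cutoff {z | z.re < p.re} (coboundary (aboveIndicator p))

variable {p z : ℂ}

lemma eventually_aboveIndicator_eq (hz : z.im ≠ p.im) :
    ∀ᶠ a in 𝓝 z, aboveIndicator p a = aboveIndicator p z := by
  rcases hz.lt_or_gt with h | h
  · filter_upwards [(isOpen_lt Complex.continuous_im continuous_const).mem_nhds h] with a ha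
    rw [aboveIndicator, aboveIndicator, if_neg (not_lt.2 (le_of_lt ha)), if_neg h.not_gt]
  · filter_upwards [(isOpen_lt continuous_const Complex.continuous_im).mem_nhds h] with a ha
    rw [aboveIndicator, aboveIndicator, if_pos ha, if_pos h]

lemma hasPrimitiveAt_rayCochain (hz : z.re < p.re) :
    HasPrimitiveAt (rayCochain p) (aboveIndicator p) z :=
  agreeAt_cutoff ((isOpen_lt Complex.continuous_re continuous_const).mem_nhds hz) _

lemma vanishesAt_rayCochain (hz : p.re < z.re ∨ z.im ≠ p.im) : VanishesAt (rayCochain p) z := by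
  refine vanishesAt_cutoff fun hcl => vanishesAt_coboundary_iff.2 ?_
  have hle : z.re ≤ p.re :=
    closure_minimal (fun a ha => le_of_lt ha) (isClosed_le Complex.continuous_re continuous_const)
      hcl
  exact eventually_aboveIndicator_eq (hz.resolve_left hle.not_gt)

lemma exactAt_rayCochain (hz : z ≠ p) : ExactAt (rayCochain p) z := by
  by_cases h : p.re < z.re ∨ z.im ≠ p.im
  · exact (vanishesAt_rayCochain h).exactAt
  · push Not at h
    exact ⟨_, hasPrimitiveAt_rayCochain (h.1.lt_of_ne fun hre => hz (Complex.ext hre h.2))⟩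

-- Follow `c` around the square with vertices `p ± t ± t * I`: it is constant along the upper, right
-- and lower sides, so `s` takes the same value at both ends of the left side.
lemma eq_of_locally_constant_around {N : Set ℂ} (hN : Convex ℝ N) {R t : ℝ} (hRt : R < t)
    (hsq : ∀ u ∈ ({t, -t} : Set ℝ), ∀ v ∈ ({t, -t} : Set ℝ), (⟨p.re + u, p.im + v⟩ : ℂ) ∈ N)
    {c s : ℂ → ZMod 2}
    (hc : ∀ z ∈ N, p.im + R < z.im ∨ p.re + R < z.re ∨ z.im < p.im - R → ∀ᶠ a in 𝓝 z, c a = c z)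
    (hcs : ∀ z ∈ N, z.re < p.re - R → ∀ᶠ a in 𝓝 z, (c + s) a = (c + s) z) :
    s ⟨p.re - t, p.im + t⟩ = s ⟨p.re - t, p.im - t⟩ := by
  have hpp := hsq t (by simp) t (by simp)
  have hpn := hsq t (by simp) (-t) (by simp)
  have hnp := hsq (-t) (by simp) t (by simp)
  have hnn := hsq (-t) (by simp) (-t) (by simp)
  simp only [← sub_eq_add_neg] at hpp hpn hnp hnn
  have hup : c ⟨p.re - t, p.im + t⟩ = c ⟨p.re + t, p.im + t⟩ :=
    eq_of_isPreconnected (hN.inter (convex_halfSpace_im_gt (p.im + R))).isPreconnected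
      (fun z hz => hc z hz.1 (.inl hz.2)) ⟨hnp, by simpa⟩ ⟨hpp, by simpa⟩
  have hright : c ⟨p.re + t, p.im + t⟩ = c ⟨p.re + t, p.im - t⟩ :=
    eq_of_isPreconnected (hN.inter (convex_halfSpace_re_gt (p.re + R))).isPreconnected
      (fun z hz => hc z hz.1 (.inr (.inl hz.2))) ⟨hpp, by simpa⟩ ⟨hpn, by simpa⟩
  have hdown : c ⟨p.re + t, p.im - t⟩ = c ⟨p.re - t, p.im - t⟩ :=
    eq_of_isPreconnected (hN.inter (convex_halfSpace_im_lt (p.im - R))).isPreconnected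
      (fun z hz => hc z hz.1 (.inr (.inr hz.2))) ⟨hpn, by simpa⟩ ⟨hnn, by simpa⟩
  have hleft : (c + s) ⟨p.re - t, p.im + t⟩ = (c + s) ⟨p.re - t, p.im - t⟩ :=
    eq_of_isPreconnected (hN.inter (convex_halfSpace_re_lt (p.re - R))).isPreconnected
      (fun z hz => hcs z hz.1 hz.2) ⟨hnp, by simpa⟩ ⟨hnn, by simpa⟩
  rw [Pi.add_apply, Pi.add_apply, hup, hright, hdown] at hleft
  exact add_left_cancel hleft

lemma not_removableAt_rayCochain (p : ℂ) : ¬ RemovableAt (rayCochain p) p := by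
  rintro ⟨c, hc⟩
  obtain ⟨δ, hδ, hball⟩ := nhds_basis_ball.eventually_iff.1 (eventually_nhdsWithin_iff.1 hc)
  have hcδ : ∀ z ∈ ball p δ, z.im ≠ p.im ∨ z.re ≠ p.re → HasPrimitiveAt (rayCochain p) c z :=
    fun z hz hne => hball hz (by rintro rfl; simp at hne)
  have h := eq_of_locally_constant_around (p := p) (R := 0) (t := δ / 2) (c := c)
    (s := aboveIndicator p) (convex_ball p δ) (half_pos hδ) ?_ (fun z hz hz' => ?_)
    (fun z hz hz' => ?_)
  · have h₁ : p.im < p.im + δ / 2 := by linarith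
    have h₂ : ¬ p.im < p.im - δ / 2 := by linarith
    simp [aboveIndicator, h₁, h₂] at h
  · intro u hu v hv
    have habs : ∀ w ∈ ({δ / 2, -(δ / 2)} : Set ℝ), w ^ 2 = (δ / 2) ^ 2 := by
      rintro w (rfl | rfl) <;> ring
    rw [mem_ball, Complex.dist_eq_re_im, Real.sqrt_lt' hδ]
    simp only [add_sub_cancel_left, habs u hu, habs v hv]
    nlinarith
  · have hne : p.re < z.re ∨ z.im ≠ p.im := by grind
    refine vanishesAt_coboundary_iff.1 ((hcδ z hz ?_).symm.trans (vanishesAt_rayCochain hne))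
    exact hne.symm.imp_right ne_of_gt
  · have hlt : z.re < p.re := by linarith
    exact (hcδ z hz (.inr hlt.ne)).eventually_add_eq (hasPrimitiveAt_rayCochain hlt)

lemma isMeromorphic_complex {ψ : Cochain ℂ} (h : {z | ¬ ExactAt ψ z}.Finite) : IsMeromorphic ψ :=
  ⟨h, fun _ _ => source_subset_manifoldInterior (.refl ℂ) trivial⟩

lemma isMeromorphic_rayCochain (p : ℂ) : IsMeromorphic (rayCochain p) :=
  isMeromorphic_complex <| (finite_singleton p).subset fun _ hz =>
    not_imp_comm.1 exactAt_rayCochain hz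

open Classical in
lemma residue_rayCochain (p : ℂ) : residue (rayCochain p) = Pi.single p 1 := by
  ext z
  rcases eq_or_ne z p with rfl | hz
  · rw [residue, if_neg (not_removableAt_rayCochain z), Pi.single_eq_same]
  · rw [(exactAt_rayCochain hz).residue_eq_zero, Pi.single_eq_of_ne hz]

end RayCochain

section PlanarResidueTheorem

variable {φ : Cochain X} {ι : Type*} {t : Finset ι} {ψ : ι → Cochain X}

lemma isMeromorphic_sum (h : ∀ i ∈ t, IsMeromorphic (ψ i)) : IsMeromorphic (∑ i ∈ t, ψ i) :=
  Finset.sum_induction _ _ (fun _ _ => .add)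
    (isMeromorphic_of_forall_exactAt fun x => VanishesAt.exactAt (.refl 0 x)) h

lemma residue_sum [T1Space X] (h : ∀ i ∈ t, IsMeromorphic (ψ i)) (x : X) :
    residue (∑ i ∈ t, ψ i) x = ∑ i ∈ t, residue (ψ i) x := by
  classical
  induction t using Finset.induction_on with
  | empty => exact VanishesAt.exactAt (.refl 0 x) |>.residue_eq_zero
  | insert i t hi ih =>
    have ht : ∀ j ∈ t, IsMeromorphic (ψ j) := fun j hj => h j (Finset.mem_insert_of_mem hj)
    rw [Finset.sum_insert hi, Finset.sum_insert hi, ← ih ht,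
      (h i (Finset.mem_insert_self i t)).residue_add (isMeromorphic_sum ht)]

lemma VanishesAt.sum {x : X} (h : ∀ i ∈ t, VanishesAt (ψ i) x) : VanishesAt (∑ i ∈ t, ψ i) x :=
  Finset.sum_induction _ (VanishesAt · x) (fun _ _ => .add) (.refl 0 x) h

lemma HasPrimitiveAt.sum {c : ι → X → ZMod 2} {x : X} (h : ∀ i ∈ t, HasPrimitiveAt (ψ i) (c i) x) :
    HasPrimitiveAt (∑ i ∈ t, ψ i) (∑ i ∈ t, c i) x := by
  classical
  induction t using Finset.induction_on with
  | empty => simpa only [Finset.sum_empty, coboundary_zero, HasPrimitiveAt] using AgreeAt.refl 0 x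
  | insert i t hi ih =>
    rw [Finset.sum_insert hi, Finset.sum_insert hi]
    exact (h i (Finset.mem_insert_self i t)).add
      (ih fun j hj => h j (Finset.mem_insert_of_mem hj))

lemma IsMeromorphic.totalResidue_eq_card (h : IsMeromorphic φ) :
    totalResidue φ = h.finite_support_residue.toFinset.card := by
  have hone : ∀ x ∈ h.finite_support_residue.toFinset, residue φ x = 1 := fun x hx =>
    Fin.eq_one_of_ne_zero _ ((Finite.mem_toFinset _).1 hx)
  rw [totalResidue, finsum_eq_sum_of_support_toFinset_subset _ h.finite_support_residue subset_rfl,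
    Finset.sum_congr rfl hone, Finset.sum_const, nsmul_one]

lemma exists_primitive_of_residue_eq_zero {χ : Cochain ℂ} (hχ : {z | ¬ ExactAt χ z}.Finite)
    (h : ∀ z, residue χ z = 0) : ∃ c, ∀ z, ExactAt χ z → HasPrimitiveAt χ c z := by
  obtain ⟨χ', hexact, hagree⟩ := exists_exactAt_of_forall_removableAt hχ
    fun z _ => residue_eq_zero_iff.1 (h z)
  obtain ⟨c, hc⟩ := h1Trivial_univ_complex χ' fun z _ => by
    by_cases hz : ExactAt χ z
    · exact (hagree z (not_not.2 hz)).exactAt hz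
    · exact hexact z hz
  exact ⟨c, fun z hz => (hagree z (not_not.2 hz)).symm.trans (hc z trivial)⟩

lemma sum_aboveIndicator_eq_card (F : Finset ℂ) {z : ℂ} (h : ∀ p ∈ F, p.im < z.im) :
    (∑ p ∈ F, aboveIndicator p) z = F.card := by
  have hone : ∀ p ∈ F, aboveIndicator p z = 1 := fun p hp => if_pos (h p hp)
  rw [Finset.sum_apply, Finset.sum_congr rfl hone, Finset.sum_const, nsmul_one]

lemma sum_aboveIndicator_eq_zero (F : Finset ℂ) {z : ℂ} (h : ∀ p ∈ F, z.im ≤ p.im) :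
    (∑ p ∈ F, aboveIndicator p) z = 0 := by
  rw [Finset.sum_apply]
  exact Finset.sum_eq_zero fun p hp => if_neg (h p hp).not_gt

-- Far from the origin, the cochain `∑ p ∈ F, rayCochain p` only jumps along the left half-plane.
lemma card_eq_zero_of_primitive {F : Finset ℂ} {c : ℂ → ZMod 2} {R : ℝ} (hF : ∀ p ∈ F, ‖p‖ ≤ R)
    (h : ∀ z, R < ‖z‖ → HasPrimitiveAt (∑ p ∈ F, rayCochain p) c z) :
    (F.card : ZMod 2) = 0 := by
  have hnorm : ∀ z : ℂ, R < |z.re| ∨ R < |z.im| → R < ‖z‖ := fun z hz =>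
    hz.elim (·.trans_le (Complex.abs_re_le_norm z)) (·.trans_le (Complex.abs_im_le_norm z))
  have hre : ∀ p ∈ F, |p.re| ≤ R := fun p hp => (Complex.abs_re_le_norm p).trans (hF p hp)
  have him : ∀ p ∈ F, |p.im| ≤ R := fun p hp => (Complex.abs_im_le_norm p).trans (hF p hp)
  have hsum := eq_of_locally_constant_around (p := 0) (N := univ) (c := c)
    (s := ∑ p ∈ F, aboveIndicator p) convex_univ (lt_add_one R) (by simp)
    (fun z _ hz => ?_) (fun z _ hz => ?_)
  · rwa [sum_aboveIndicator_eq_card F fun p hp => ?_, sum_aboveIndicator_eq_zero F fun p hp => ?_]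
      at hsum
    · have := abs_le.1 (him p hp)
      simp only [Complex.zero_im]
      linarith
    · have := abs_le.1 (him p hp)
      simp only [Complex.zero_im]
      linarith
  · simp only [Complex.zero_re, Complex.zero_im, zero_add, zero_sub] at hz
    refine vanishesAt_coboundary_iff.1
      ((h z (hnorm z ?_)).symm.trans (VanishesAt.sum fun p hp => ?_))
    · simp only [lt_abs]
      grind
    · have := abs_le.1 (hre p hp)
      have := abs_le.1 (him p hp)
      exact vanishesAt_rayCochain (by grind)
  · simp only [Complex.zero_re, zero_sub] at hz
    refine (h z (hnorm z (.inl (lt_abs.2 (.inr (by linarith)))))).eventually_add_eq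
      (HasPrimitiveAt.sum fun p hp => hasPrimitiveAt_rayCochain ?_)
    linarith [(abs_le.1 (hre p hp)).1]

lemma residue_add_sum_rayCochain {ψ : Cochain ℂ} (h : IsMeromorphic ψ) (z : ℂ) :
    residue (ψ + ∑ p ∈ h.finite_support_residue.toFinset, rayCochain p) z = 0 := by
  classical
  rw [h.residue_add (isMeromorphic_sum fun p _ => isMeromorphic_rayCochain p),
    residue_sum fun p _ => isMeromorphic_rayCochain p]
  simp only [residue_rayCochain, Finset.sum_pi_single, Finite.mem_toFinset, Function.mem_support]
  by_cases h0 : residue ψ z = 0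
  · simp [h0]
  · rw [if_pos h0, Fin.eq_one_of_ne_zero _ h0]
    exact CharTwo.add_self_eq_zero 1

theorem IsMeromorphic.totalResidue_eq_zero_of_bounded {ψ : Cochain ℂ} (h : IsMeromorphic ψ) {r : ℝ}
    (hr : ∀ z, r < ‖z‖ → VanishesAt ψ z) : totalResidue ψ = 0 := by
  set F := h.finite_support_residue.toFinset
  have hχ := h.add (isMeromorphic_sum (t := F) fun p _ => isMeromorphic_rayCochain p)
  obtain ⟨c, hc⟩ := exists_primitive_of_residue_eq_zero hχ.finite_singularities
    (residue_add_sum_rayCochain h)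
  obtain ⟨R, hsub⟩ :=
    (hχ.finite_singularities.union F.finite_toSet).isBounded.exists_norm_le
  rw [h.totalResidue_eq_card]
  refine card_eq_zero_of_primitive (c := c) (R := max R r) (fun p hp => ?_) fun z hz => ?_
  · exact (hsub p (.inr hp)).trans (le_max_left R r)
  · have hexact : ExactAt (ψ + ∑ p ∈ F, rayCochain p) z := by
      by_contra hn
      exact (((le_max_left R r).trans_lt hz).trans_le (hsub z (.inl hn))).false
    have hψ := hr z ((le_max_right R r).trans_lt hz)
    exact (agreeAt_add_right_iff.2 hψ).symm.trans (hc z hexact)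

end PlanarResidueTheorem


section CuttingAlongCircles

open Metric

lemma finite_sphere_inter_sphere {a : ℂ} (ha : a ≠ 0) (ρ r : ℝ) :
    (sphere 0 ρ ∩ sphere a r).Finite := by
  rcases (sphere 0 ρ ∩ sphere a r).subsingleton_or_nontrivial with h | ⟨p, hp, q, hq, hpq⟩
  · exact h.finite
  · refine ((finite_singleton q).insert p).subset fun z hz => ?_
    exact EuclideanGeometry.eq_of_dist_eq_of_dist_eq_of_finrank_eq_two
      Complex.finrank_real_complex ha.symm hpq hp.1 hq.1 hz.1 hp.2 hq.2 hz.2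

lemma finite_sphere_inter_frontier_union {ρ : ℝ} {O O' : Set ℂ}
    (h : (sphere 0 ρ ∩ frontier O).Finite) (h' : (sphere 0 ρ ∩ frontier O').Finite) :
    (sphere 0 ρ ∩ frontier (O ∪ O')).Finite := by
  refine (h.union h').subset fun z hz => ?_
  exact (frontier_union_subset O O' hz.2).imp (fun hf => ⟨hz.1, hf.1⟩) fun hf => ⟨hz.1, hf.2⟩

lemma exists_ball_finite_frontier {ρ : ℝ} (hρ : 0 < ρ) {z : ℂ} (hz : z ∈ sphere 0 ρ) {W : Set ℂ}
    (hW : W ∈ 𝓝 z) :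
    ∃ O, IsOpen O ∧ z ∈ O ∧ O ⊆ W ∧ (sphere 0 ρ ∩ frontier O).Finite := by
  obtain ⟨r, hr, hrW⟩ := Metric.mem_nhds_iff.1 hW
  exact ⟨ball z r, isOpen_ball, mem_ball_self hr, hrW,
    (finite_sphere_inter_sphere (ne_of_mem_sphere hz hρ.ne') ρ r).subset
      (inter_subset_inter_right _ frontier_ball_subset_sphere)⟩

lemma exists_isOpen_finite_frontier {ρ : ℝ} (hρ : 0 < ρ) {K W : Set ℂ} (hK : IsCompact K)
    (hKρ : K ⊆ sphere 0 ρ) (hW : IsOpen W) (hKW : K ⊆ W) :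
    ∃ O, IsOpen O ∧ K ⊆ O ∧ O ⊆ W ∧ (sphere 0 ρ ∩ frontier O).Finite := by
  refine hK.induction_on (p := fun s => ∃ O, IsOpen O ∧ s ⊆ O ∧ O ⊆ W ∧
    (sphere 0 ρ ∩ frontier O).Finite) ⟨∅, by simp⟩
    (fun s t hst ⟨O, hO, htO, h⟩ => ⟨O, hO, hst.trans htO, h⟩) ?_ fun z hz => ?_
  · rintro s t ⟨O, hO, hsO, hOW, hfin⟩ ⟨O', hO', htO', hOW', hfin'⟩
    exact ⟨O ∪ O', hO.union hO', union_subset_union hsO htO', union_subset hOW hOW',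
      finite_sphere_inter_frontier_union hfin hfin'⟩
  · obtain ⟨O, hO, hzO, h⟩ :=
      exists_ball_finite_frontier hρ (hKρ hz) (hW.mem_nhds (hKW hz))
    exact ⟨O, mem_nhdsWithin_of_mem_nhds (hO.mem_nhds hzO), O, hO, subset_rfl, h⟩

open Classical in
lemma eventually_piecewise_eq {O : Set X} {c d : X → ZMod 2} {x : X} (hx : x ∉ frontier O) :
    ∀ᶠ a in 𝓝 x, O.piecewise c d a = if x ∈ O then c a else d a := by
  by_cases h : x ∈ O
  · have hint : O ∈ 𝓝 x := mem_interior_iff_mem_nhds.1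
      (not_not.1 fun hn => hx ⟨subset_closure h, hn⟩)
    filter_upwards [hint] with a ha
    rw [if_pos h, O.piecewise_eq_of_mem _ _ ha]
  · have hcl : x ∉ closure O := fun hcl => hx ⟨hcl, fun hint => h (interior_subset hint)⟩
    filter_upwards [isClosed_closure.isOpen_compl.mem_nhds hcl] with a ha
    rw [if_neg h, O.piecewise_eq_of_notMem _ _ fun haO => ha (subset_closure haO)]

open Classical in
lemma HasPrimitiveAt.piecewise {φ : Cochain X} {O : Set X} {c d : X → ZMod 2} {x : X}
    (hx : x ∉ frontier O) (hc : x ∈ O → HasPrimitiveAt φ c x) (hd : x ∉ O → HasPrimitiveAt φ d x) :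
    HasPrimitiveAt φ (O.piecewise c d) x := by
  by_cases h : x ∈ O
  · exact (hc h).congr ((eventually_piecewise_eq hx).mono fun a ha => by rw [ha, if_pos h])
  · exact (hd h).congr ((eventually_piecewise_eq hx).mono fun a ha => by rw [ha, if_neg h])

variable {ψ : Cochain ℂ} {ρ : ℝ}

lemma exists_primitive_sphere (hρ : 0 < ρ) (h : ∀ z ∈ sphere 0 ρ, ExactAt ψ z) :
    ∃ c, {z ∈ sphere 0 ρ | ¬ HasPrimitiveAt ψ c z}.Finite := by
  classical
  suffices ∃ O, IsOpen O ∧ sphere 0 ρ ⊆ O ∧ (sphere 0 ρ ∩ frontier O).Finite ∧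
      ∃ c, {z ∈ sphere 0 ρ ∩ O | ¬ HasPrimitiveAt ψ c z}.Finite by
    obtain ⟨O, -, hO, -, c, hc⟩ := this
    exact ⟨c, hc.subset fun z hz => ⟨⟨hz.1, hO hz.1⟩, hz.2⟩⟩
  refine (isCompact_sphere (0 : ℂ) ρ).induction_on (p := fun s => ∃ O, IsOpen O ∧ s ⊆ O ∧
    (sphere 0 ρ ∩ frontier O).Finite ∧ ∃ c, {z ∈ sphere 0 ρ ∩ O | ¬ HasPrimitiveAt ψ c z}.Finite)
    ⟨∅, by simp⟩ (fun s t hst ⟨O, hO, htO, h⟩ => ⟨O, hO, hst.trans htO, h⟩) ?_ fun z hz => ?_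
  · rintro s t ⟨O, hO, hsO, hfin, c, hc⟩ ⟨O', hO', htO', hfin', d, hd⟩
    refine ⟨O ∪ O', hO.union hO', union_subset_union hsO htO',
      finite_sphere_inter_frontier_union hfin hfin', O.piecewise c d,
      ((hc.union hd).union hfin).subset ?_⟩
    rintro z ⟨⟨hz, hzO⟩, hbad⟩
    by_contra! hgood
    simp only [mem_union, not_or] at hgood
    refine hbad (.piecewise (fun hf => hgood.2 ⟨hz, hf⟩) (fun hzO => ?_) fun hzO' => ?_)
    · exact not_not.1 fun hn => hgood.1.1 ⟨⟨hz, hzO⟩, hn⟩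
    · exact not_not.1 fun hn => hgood.1.2 ⟨⟨hz, hzO.resolve_left hzO'⟩, hn⟩
  · obtain ⟨c, hc⟩ := h z hz
    obtain ⟨O, hO, hzO, hOc, hfin⟩ := exists_ball_finite_frontier hρ hz hc.eventually
    exact ⟨O, mem_nhdsWithin_of_mem_nhds (hO.mem_nhds hzO), O, hO, subset_rfl, hfin, c,
      finite_empty.subset fun w hw => hw.2 (hOc hw.1.2)⟩

lemma exists_primitive_sphere_eq_zero (hρ : 0 < ρ) (h : ∀ z ∈ sphere 0 ρ, ExactAt ψ z) {U : Set ℂ}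
    (hU : IsOpen U) (hψ : ∀ z ∈ sphere 0 ρ, z ∉ U → VanishesAt ψ z) :
    ∃ c, {z ∈ sphere 0 ρ | ¬ HasPrimitiveAt ψ c z}.Finite ∧
      ∀ z ∈ sphere 0 ρ, z ∉ U → ∀ᶠ a in 𝓝 z, c a = 0 := by
  classical
  obtain ⟨c, hc⟩ := exists_primitive_sphere hρ h
  obtain ⟨O, hO, hUO, hOψ, hfin⟩ := exists_isOpen_finite_frontier hρ
    ((isCompact_sphere 0 ρ).diff hU) sdiff_subset (isOpen_setOf_agreeAt ψ 0)
    fun z hz => hψ z hz.1 hz.2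
  refine ⟨O.piecewise 0 c, (hc.union hfin).subset fun z hz => ?_, fun z hz hzU => ?_⟩
  · by_contra! hgood
    simp only [mem_union, not_or] at hgood
    refine hz.2 (.piecewise (fun hf => hgood.2 ⟨hz.1, hf⟩) (fun hzO => ?_) fun _ => ?_)
    · exact (hOψ hzO).trans (coboundary_zero (X := ℂ) ▸ .refl 0 z)
    · exact not_not.1 fun hn => hgood.1 ⟨hz.1, hn⟩
  · filter_upwards [hO.mem_nhds (hUO ⟨hz, hzU⟩)] with a ha using O.piecewise_eq_of_mem _ _ ha

-- The new cochain is `ψ + δc` inside the circle, plus the coboundary of `c` cut off at the circle,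
-- where `c` is a primitive of `ψ` at all but finitely many points of the circle.
lemma exists_cut_along_sphere (hψ : {z | ¬ ExactAt ψ z}.Finite) (hρ : 0 < ρ)
    (h : ∀ z ∈ sphere 0 ρ, ExactAt ψ z) {U : Set ℂ} (hU : IsOpen U)
    (hψU : ∀ z ∈ sphere 0 ρ, z ∉ U → VanishesAt ψ z) :
    ∃ u : Cochain ℂ, {z | ¬ ExactAt u z}.Finite ∧ (∀ z, ‖z‖ < ρ → AgreeAt u ψ z) ∧
      (∀ z, ρ < ‖z‖ → VanishesAt u z) ∧ ∀ z ∈ sphere 0 ρ, z ∉ U → VanishesAt u z := by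
  classical
  obtain ⟨c, hc, hcU⟩ := exists_primitive_sphere_eq_zero hρ h hU hψU
  set B : Set ℂ := ball 0 ρ
  set u : Cochain ℂ := cutoff B (ψ + coboundary c) + coboundary (B.piecewise c 0)
  have hin : ∀ z, ‖z‖ < ρ → AgreeAt u ψ z := fun z hz => by
    have hB : B ∈ 𝓝 z := isOpen_ball.mem_nhds (mem_ball_zero_iff.2 hz)
    refine .of_mem_nhds hB fun a ha b hb => ?_
    simp only [u, Pi.add_apply, cutoff, coboundary, ha, hb, and_self, if_true,
      B.piecewise_eq_of_mem, CharTwo.add_cancel_right]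
  have hout : ∀ z, ρ < ‖z‖ → VanishesAt u z := fun z hz => by
    have hB : (closedBall 0 ρ)ᶜ ∈ 𝓝 z := isClosed_closedBall.isOpen_compl.mem_nhds (by simpa)
    refine .of_mem_nhds hB fun a ha b hb => ?_
    have ha' : a ∉ B := fun hn => ha (ball_subset_closedBall hn)
    have hb' : b ∉ B := fun hn => hb (ball_subset_closedBall hn)
    simp [u, cutoff, coboundary, ha', hb']
  have hcirc : ∀ z, HasPrimitiveAt ψ c z → HasPrimitiveAt u (B.piecewise c 0) z := fun z hz =>
    agreeAt_add_right_iff.2 (vanishesAt_add_iff.2 hz).cutoff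
  refine ⟨u, (hψ.union hc).subset fun z hz => ?_, hin, hout, fun z hz hzU => ?_⟩
  · by_contra! hgood
    simp only [mem_union, not_or] at hgood
    rcases lt_trichotomy ‖z‖ ρ with h | h | h
    · exact hz ((hin z h).exactAt (not_not.1 hgood.1))
    · have hprim := not_not.1 fun hn => hgood.2 ⟨mem_sphere_zero_iff_norm.2 h, hn⟩
      exact hz ⟨_, hcirc z hprim⟩
    · exact hz (hout z h).exactAt
  · have hcz := hcU z hz hzU
    have hvan : VanishesAt (coboundary c) z := vanishesAt_coboundary_of_mem_nhds hcz fun _ => id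
    refine (hcirc z ((hψU z hz hzU).trans hvan.symm)).trans
      (vanishesAt_coboundary_of_mem_nhds (k := 0) hcz fun a ha => ?_)
    by_cases haB : a ∈ B
    · rwa [B.piecewise_eq_of_mem _ _ haB]
    · exact B.piecewise_eq_of_notMem _ _ haB

end CuttingAlongCircles

section ResidueTheorem

variable {φ : Cochain X}

lemma finite_singularities_pullback_symm (e : OpenPartialHomeomorph X ℂ) (he : e.target = univ)
    (hφ : {x | ¬ ExactAt φ x}.Finite) : {z | ¬ ExactAt (pullback e.symm φ) z}.Finite := by
  have heq : {z | ¬ ExactAt (pullback e.symm φ) z} = e.symm ⁻¹' {x | ¬ ExactAt φ x} := by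
    ext z
    exact not_congr (exactAt_pullback_symm_iff e (he ▸ mem_univ z))
  rw [heq]
  refine hφ.preimage (e.symm.injOn.mono ?_)
  rw [e.symm_source, he]
  exact subset_univ _

lemma exists_radius_between {S : Set ℂ} (hS : S.Finite) {K : Set ℂ} (hK : IsCompact K)
    (hK1 : ∀ z ∈ K, ‖z‖ < 1) :
    ∃ ρ, 0 < ρ ∧ ρ < 1 ∧ (∀ z ∈ K, ‖z‖ < ρ) ∧ ∀ z ∈ S, ‖z‖ ≠ ρ := by
  obtain ⟨r, hr0, hr1, hr⟩ : ∃ r : ℝ, 0 ≤ r ∧ r < 1 ∧ ∀ z ∈ K, ‖z‖ ≤ r := by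
    rcases K.eq_empty_or_nonempty with rfl | hne
    · exact ⟨0, le_rfl, one_pos, by simp⟩
    · obtain ⟨w, hw, hmax⟩ := hK.exists_isMaxOn hne continuous_norm.continuousOn
      exact ⟨‖w‖, norm_nonneg w, hK1 w hw, fun z hz => hmax hz⟩
  obtain ⟨ρ, hρ, hne⟩ := (Ioo_infinite hr1).exists_notMem_finite (hS.image norm)
  exact ⟨ρ, hr0.trans_lt hρ.1, hρ.2, fun z hz => (hr z hz).trans_lt hρ.1,
    fun z hz heq => hne ⟨z, hz, heq⟩⟩

lemma exists_radius_of_support_subset [CompactSpace X] (hφ : IsMeromorphic φ)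
    (e : OpenPartialHomeomorph X ℂ) (he : e.target = univ) {U : Set X} (hU : IsOpen U)
    (h : ∀ x ∉ U, ¬ VanishesAt φ x → x ∈ e.source ∧ ‖e x‖ < 1) :
    ∃ ρ, 0 < ρ ∧ (∀ z, ‖z‖ = ρ → ExactAt φ (e.symm z)) ∧
      ∀ z, ρ ≤ ‖z‖ → e.symm z ∉ U → VanishesAt φ (e.symm z) := by
  set K := {x | VanishesAt φ x}ᶜ ∩ Uᶜ
  have hK : IsCompact K :=
    ((isOpen_setOf_agreeAt φ 0).isClosed_compl.inter hU.isClosed_compl).isCompact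
  have hKe : K ⊆ e.source := fun x hx => (h x hx.2 hx.1).1
  obtain ⟨ρ, hρ, -, hKρ, hSρ⟩ := exists_radius_between
    (finite_singularities_pullback_symm e he hφ.finite_singularities)
    (hK.image_of_continuousOn (e.continuousOn.mono hKe))
    (by rintro _ ⟨x, hx, rfl⟩; exact (h x hx.2 hx.1).2)
  have hz' : ∀ z, z ∈ e.target := fun z => he ▸ mem_univ z
  refine ⟨ρ, hρ, fun z hz => ?_, fun z hz hzU => ?_⟩
  · exact (exactAt_pullback_symm_iff e (hz' z)).1 (not_not.1 fun hn => hSρ z hn hz)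
  · by_contra hn
    exact (hKρ z ⟨e.symm z, ⟨hn, hzU⟩, e.right_inv (hz' z)⟩).not_ge hz

lemma exists_totalResidue_eq_of_support_subset [T2Space X] [CompactSpace X] (hφ : IsMeromorphic φ)
    (e : OpenPartialHomeomorph X ℂ) (he : e.target = univ) {U : Set X} (hU : IsOpen U)
    (h : ∀ x ∉ U, ¬ VanishesAt φ x → x ∈ e.source ∧ ‖e x‖ < 1) :
    ∃ φ', IsMeromorphic φ' ∧ totalResidue φ' = totalResidue φ ∧ ∀ x ∉ U, VanishesAt φ' x := by
  obtain ⟨ρ, hρ, hexact, hvan⟩ := exists_radius_of_support_subset hφ e he hU h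
  have hsymm : Continuous e.symm := by
    rw [← continuousOn_univ, ← he]; exact e.continuousOn_symm
  obtain ⟨u, hu, hin, hout, hcirc⟩ := exists_cut_along_sphere
    (finite_singularities_pullback_symm e he hφ.finite_singularities) hρ
    (fun z hz => (hexact z (by simpa using hz)).pullback hsymm.continuousAt)
    (hU.preimage hsymm)
    fun z hz hzU => (hvan z (by simpa using hz.ge) hzU).pullback hsymm.continuousAt
  have hum := isMeromorphic_complex hu
  obtain ⟨v, hv⟩ := exists_isExtension e (isCompact_closedBall 0 ρ) (he ▸ subset_univ _)
    fun z hz => hout z (by simpa using hz)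
  have hvm := hv.isMeromorphic hum
  refine ⟨φ + v, hφ.add hvm, ?_, fun x hx => ?_⟩
  · rw [hφ.totalResidue_add hvm, hv.totalResidue_eq he, hum.totalResidue_eq_zero_of_bounded hout,
      add_zero]
  by_cases hxe : x ∈ e.source
  · have hleft : e.symm (e x) = x := e.left_inv hxe
    rcases lt_or_ge ‖e x‖ ρ with hlt | hge
    · refine vanishesAt_add_iff.2 (AgreeAt.symm ((hv.agreeAt x hxe).trans ?_))
      exact ((hin _ hlt).pullback (e.continuousAt hxe)).trans
        (agreeAt_pullback_pullback_symm e φ hxe)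
    · refine (hleft ▸ hvan (e x) hge (hleft.symm ▸ hx)).add (hv.vanishesAt fun _ => ?_)
      rcases hge.lt_or_eq with hlt | heq
      · exact hout _ hlt
      · exact hcirc _ (by simpa using heq.symm) (by rwa [mem_preimage, hleft])
  · exact .add (not_not.1 fun hn => hxe (h x hx hn).1) (hv.vanishesAt fun hn => (hxe hn).elim)

lemma totalResidue_eq_zero_of_finset_cover [T2Space X] [CompactSpace X] {ι : Type*} (t : Finset ι)
    (e : ι → OpenPartialHomeomorph X ℂ) (he : ∀ i, (e i).target = univ) (hφ : IsMeromorphic φ)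
    (h : ∀ x, ¬ VanishesAt φ x → ∃ i ∈ t, x ∈ (e i).source ∧ ‖e i x‖ < 1) :
    totalResidue φ = 0 := by
  classical
  induction t using Finset.induction_on generalizing φ with
  | empty =>
    have hres : ∀ x, residue φ x = 0 := fun x =>
      (not_not.1 fun hn => by simpa using h x hn : VanishesAt φ x).exactAt.residue_eq_zero
    simp only [totalResidue, hres, finsum_zero]
  | insert i t _ ih =>
    have hU : IsOpen (⋃ j ∈ t, (e j).source ∩ e j ⁻¹' Metric.ball 0 1) :=
      isOpen_biUnion fun j _ => (e j).isOpen_inter_preimage Metric.isOpen_ball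
    obtain ⟨φ', hφ', hres, hvan⟩ := exists_totalResidue_eq_of_support_subset hφ (e i) (he i) hU
      fun x hx hn => by
        simp only [mem_iUnion, mem_inter_iff, mem_preimage, mem_ball_zero_iff, not_exists] at hx
        obtain ⟨j, hj, hxj⟩ := h x hn
        rcases Finset.mem_insert.1 hj with rfl | hjt
        exacts [hxj, (hx j hjt hxj).elim]
    rw [← hres]
    refine ih hφ' fun x hn => ?_
    simpa only [mem_iUnion, exists_prop, mem_inter_iff, mem_preimage, mem_ball_zero_iff] using
      not_imp_comm.1 (hvan x) hn

theorem IsMeromorphic.totalResidue_eq_zero [T2Space X] [CompactSpace X] (hφ : IsMeromorphic φ)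
    (h : ∀ x ∉ manifoldInterior X, VanishesAt φ x) : totalResidue φ = 0 := by
  have hchart : ∀ x : manifoldInterior X, ∃ e : OpenPartialHomeomorph X ℂ,
      e.target = univ ∧ x.1 ∈ e.source ∧ e x = 0 := fun x =>
    let ⟨e, he, hx, h0, _⟩ := exists_disc_chart x.2 univ_mem
    ⟨e, he, hx, h0⟩
  choose e he hx h0 using hchart
  have hcompact : IsCompact {x | VanishesAt φ x}ᶜ :=
    (isOpen_setOf_agreeAt φ 0).isClosed_compl.isCompact
  obtain ⟨t, ht⟩ := hcompact.elim_finite_subcover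
    (fun i => (e i).source ∩ e i ⁻¹' Metric.ball 0 1)
    (fun i => (e i).isOpen_inter_preimage Metric.isOpen_ball)
    fun x hxφ => mem_iUnion.2 ⟨⟨x, not_imp_comm.1 (h x) hxφ⟩, hx _, by simp [h0]⟩
  exact totalResidue_eq_zero_of_finset_cover t e he hφ fun x hn => by
    simpa only [mem_iUnion, exists_prop, mem_inter_iff, mem_preimage, mem_ball_zero_iff] using ht hn

open Classical in
lemma IsMeromorphic.residue_ne_single [T2Space X] [CompactSpace X] (hφ : IsMeromorphic φ)
    (h : ∀ x ∉ manifoldInterior X, VanishesAt φ x) (a : X) : residue φ ≠ Pi.single a 1 := by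
  intro hres
  have h0 := hφ.totalResidue_eq_zero h
  rw [totalResidue, hres, finsum_eq_single _ a fun x hx => Pi.single_eq_of_ne hx 1,
    Pi.single_eq_same] at h0
  exact one_ne_zero h0

end ResidueTheorem

end Cochain

namespace HalfPlane

/-- The inclusion of the open upper half-plane into the plane. -/
def inclusion : OpenPartialHomeomorph HalfPlane ℂ where
  toFun := Subtype.val
  invFun := retract
  source := {z | 0 < z.1.im}
  target := {z | 0 < z.im}
  map_source' _ := id
  map_target' z hz := by rwa [mem_ofPred_eq, coe_retract (le_of_lt hz)]
  left_inv' z _ := leftInverse_retract z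
  right_inv' _ hz := coe_retract (le_of_lt hz)
  open_source := isOpen_lt continuous_const (Complex.continuous_im.comp continuous_subtype_val)
  open_target := isOpen_lt continuous_const Complex.continuous_im
  continuousOn_toFun := continuous_subtype_val.continuousOn
  continuousOn_invFun := continuous_retract.continuousOn

/-- The restriction to the closed upper half-plane of a partial homeomorphism of the plane which
preserves it. -/
noncomputable def restrict (b : OpenPartialHomeomorph ℂ ℂ)
    (hb : b.IsImage {z | 0 ≤ z.im} {z | 0 ≤ z.im}) :
    OpenPartialHomeomorph HalfPlane HalfPlane where
  toFun z := retract (b z)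
  invFun z := retract (b.symm z)
  source := Subtype.val ⁻¹' b.source
  target := Subtype.val ⁻¹' b.target
  map_source' z hz := by
    rw [mem_preimage, coe_retract ((hb hz).2 z.2)]
    exact b.map_source hz
  map_target' z hz := by
    rw [mem_preimage, coe_retract ((hb.symm hz).2 z.2)]
    exact b.map_target hz
  left_inv' z hz := by
    rw [coe_retract ((hb hz).2 z.2), b.left_inv hz, leftInverse_retract]
  right_inv' z hz := by
    rw [coe_retract ((hb.symm hz).2 z.2), b.right_inv hz, leftInverse_retract]
  open_source := b.open_source.preimage continuous_subtype_val
  open_target := b.open_target.preimage continuous_subtype_val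
  continuousOn_toFun := continuous_retract.comp_continuousOn
    (b.continuousOn.comp continuous_subtype_val.continuousOn (mapsTo_preimage _ _))
  continuousOn_invFun := continuous_retract.comp_continuousOn
    (b.symm.continuousOn.comp continuous_subtype_val.continuousOn (mapsTo_preimage _ _))

lemma isImage_univBall {p : ℂ} (hp : p.im = 0) {r : ℝ} (hr : 0 < r) :
    (OpenPartialHomeomorph.univBall p r).IsImage {z | 0 ≤ z.im} {z | 0 ≤ z.im} := fun z _ => by
  have him : (OpenPartialHomeomorph.univBall p r z).im = r * (√(1 + ‖z‖ ^ 2))⁻¹ * z.im := by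
    rw [OpenPartialHomeomorph.univBall, dif_pos hr]
    change (r • (√(1 + ‖z‖ ^ 2))⁻¹ • z + p).im = _
    simp [hp, mul_assoc]
  have hpos : 0 < r * (√(1 + ‖z‖ ^ 2))⁻¹ := by positivity
  rw [mem_ofPred_eq, him, mul_nonneg_iff_of_pos_left hpos, mem_ofPred_eq]

lemma exists_shrinking {p : HalfPlane} (hp : p.1.im = 0) {W : Set HalfPlane} (hW : W ∈ 𝓝 p) :
    ∃ b : OpenPartialHomeomorph HalfPlane HalfPlane,
      b.target = univ ∧ p ∈ b.source ∧ b p = ⟨0, le_rfl⟩ ∧ b.source ⊆ W := by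
  obtain ⟨r, hr, hball⟩ := Metric.mem_nhds_iff.1 hW
  have hs := OpenPartialHomeomorph.univBall_target p.1 hr
  refine ⟨(restrict _ (isImage_univBall hp hr)).symm, ?_, ?_, ?_, ?_⟩
  · change Subtype.val ⁻¹' (OpenPartialHomeomorph.univBall p.1 r).source = univ
    rw [OpenPartialHomeomorph.univBall_source, preimage_univ]
  · change p.1 ∈ (OpenPartialHomeomorph.univBall p.1 r).target
    exact hs ▸ Metric.mem_ball_self hr
  · change retract ((OpenPartialHomeomorph.univBall p.1 r).symm p.1) = _
    rw [OpenPartialHomeomorph.univBall_symm_apply_center]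
    exact Subtype.ext (coe_retract le_rfl)
  · change Subtype.val ⁻¹' (OpenPartialHomeomorph.univBall p.1 r).target ⊆ W
    rw [hs]
    exact hball

end HalfPlane

/-- Surfaces with boundary, without any separation axiom: every point has a neighbourhood
homeomorphic to an open subset of the closed half-plane. -/
def LocallyHalfPlane (X : Type*) [TopologicalSpace X] : Prop :=
  ∀ x : X, ∃ e : OpenPartialHomeomorph X HalfPlane, x ∈ e.source

lemma mem_manifoldInterior_of_im_pos (e : OpenPartialHomeomorph X HalfPlane) {x : X}
    (hx : x ∈ e.source) (h : 0 < (e x).1.im) : x ∈ manifoldInterior X :=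
  source_subset_manifoldInterior (e.trans HalfPlane.inclusion) ⟨hx, h⟩

lemma im_eq_zero_of_mem_manifoldBoundary (e : OpenPartialHomeomorph X HalfPlane) {x : X}
    (hx : x ∈ e.source) (h : x ∈ manifoldBoundary X) : (e x).1.im = 0 :=
  le_antisymm (not_lt.1 fun hlt => h (mem_manifoldInterior_of_im_pos e hx hlt)) (e x).2

lemma exists_centered_halfPlane_chart (e : OpenPartialHomeomorph X HalfPlane) {x : X}
    (hx : x ∈ e.source) (h0 : (e x).1.im = 0) {G : Set X} (hG : G ∈ 𝓝 x) :
    ∃ e' : OpenPartialHomeomorph X HalfPlane,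
      e'.target = univ ∧ x ∈ e'.source ∧ e' x = ⟨0, le_rfl⟩ ∧ e'.source ⊆ G :=
  exists_chart_subset_of_forall_nhds e hx (fun _ => HalfPlane.exists_shrinking h0) hG

lemma LocallyHalfPlane.exists_boundary_chart (hX : LocallyHalfPlane X) {x : X}
    (hx : x ∈ manifoldBoundary X) {G : Set X} (hG : G ∈ 𝓝 x) :
    ∃ e : OpenPartialHomeomorph X HalfPlane,
      e.target = univ ∧ x ∈ e.source ∧ e x = ⟨0, le_rfl⟩ ∧ e.source ⊆ G := by
  obtain ⟨e, he⟩ := hX x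
  exact exists_centered_halfPlane_chart e he (im_eq_zero_of_mem_manifoldBoundary e he hx) hG

namespace Cochain

lemma vanishesAt_rayCochain_one_add_zero {z : ℂ} (hz : z.im = 0 → z.re ∉ Icc (0 : ℝ) 1) :
    VanishesAt (rayCochain 1 + rayCochain 0) z := by
  by_cases him : z.im = 0
  · rcases lt_or_ge z.re 0 with h0 | h0
    · have h1 : HasPrimitiveAt (rayCochain 1) (aboveIndicator 1) z :=
        hasPrimitiveAt_rayCochain (by simpa using h0.trans one_pos)
      have h0 : HasPrimitiveAt (rayCochain 0) (aboveIndicator 0) z :=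
        hasPrimitiveAt_rayCochain (by simpa using h0)
      have heq : aboveIndicator 1 = aboveIndicator 0 := by unfold aboveIndicator; simp
      exact vanishesAt_add_iff.2 (h1.trans (heq ▸ h0.symm))
    · have h1 : 1 < z.re := not_le.1 fun h1 => hz him ⟨h0, h1⟩
      exact .add (vanishesAt_rayCochain (.inl (by simpa)))
        (vanishesAt_rayCochain (.inl (by simpa using one_pos.trans h1)))
  · exact .add (vanishesAt_rayCochain (.inr (by simpa))) (vanishesAt_rayCochain (.inr (by simpa)))

open Classical in
lemma exists_segment_cochain (p q : ℂ) : ∃ ψ : Cochain ℂ, IsMeromorphic ψ ∧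
    (∀ z ∉ segment ℝ p q, VanishesAt ψ z) ∧ residue ψ = Pi.single p 1 + Pi.single q 1 := by
  rcases eq_or_ne p q with rfl | hpq
  · refine ⟨0, isMeromorphic_of_forall_exactAt fun z => VanishesAt.exactAt (.refl 0 z),
      fun z _ => .refl 0 z, ?_⟩
    rw [ZModModule.add_self]
    exact funext fun z => VanishesAt.exactAt (.refl 0 z) |>.residue_eq_zero
  have hne : q - p ≠ 0 := sub_ne_zero.2 hpq.symm
  let τ : ℂ ≃ₜ ℂ := (Homeomorph.subRight p).trans (Homeomorph.mulRight₀ _ (inv_ne_zero hne))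
  have hτ : ∀ z t, τ z = t ↔ z = p + t * (q - p) := fun z t => by
    simp only [τ, Homeomorph.trans_apply, Homeomorph.coe_subRight, Homeomorph.coe_mulRight₀]
    rw [mul_inv_eq_iff_eq_mul₀ hne, sub_eq_iff_eq_add']
  have hsing : ∀ z, z ≠ p → z ≠ q → ExactAt (rayCochain 1 + rayCochain 0) (τ z) := fun z hp hq =>
    (exactAt_rayCochain (by simpa [hτ] using hq)).add (exactAt_rayCochain (by simpa [hτ] using hp))
  refine ⟨pullback τ (rayCochain 1 + rayCochain 0), ?_, fun z hz => ?_, ?_⟩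
  · refine isMeromorphic_complex (((finite_singleton q).insert p).subset fun z hz => ?_)
    by_contra! h
    simp only [mem_insert_iff, mem_singleton_iff, not_or] at h
    exact hz ((hsing z h.1 h.2).pullback τ.continuous.continuousAt)
  · refine AgreeAt.pullback (ψ := 0)
      (vanishesAt_rayCochain_one_add_zero fun him hre => hz ?_) τ.continuous.continuousAt
    rw [segment_eq_image']
    exact ⟨(τ z).re, hre, ((hτ z (τ z).re).1 (Complex.ext rfl him)).symm⟩
  · have hres : ∀ z, residue (pullback τ (rayCochain 1 + rayCochain 0)) z =
        residue (rayCochain 1 + rayCochain 0) (τ z) := fun z =>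
      residue_pullback τ.toOpenPartialHomeomorph _ (mem_univ z)
    ext z
    rw [hres, (isMeromorphic_rayCochain 1).residue_add (isMeromorphic_rayCochain 0),
      residue_rayCochain, residue_rayCochain]
    simp [Pi.single_apply, hτ, add_comm]

open Classical in
lemma exists_halfPlane_end_cochain : ∃ ψ : Cochain HalfPlane, IsMeromorphic ψ ∧
    (∀ z ∉ Subtype.val ⁻¹' ({0} ×ℂ Icc (0 : ℝ) 1), VanishesAt ψ z) ∧
    residue ψ = Pi.single ⟨Complex.I, zero_le_one⟩ 1 := by
  let i : HalfPlane := ⟨Complex.I, zero_le_one⟩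
  let ρ : ℂ ≃ₜ ℂ := Homeomorph.mulLeft₀ (-Complex.I) (neg_ne_zero.2 Complex.I_ne_zero)
  have hre : ∀ z, (ρ z).re = z.im := by simp [ρ]
  have him : ∀ z, (ρ z).im = -z.re := by simp [ρ]
  have hρ : Continuous fun z : HalfPlane => ρ z := ρ.continuous.comp continuous_subtype_val
  have hρi : ρ i = 1 := Complex.ext (by simp [hre, i]) (by simp [him, i])
  have hexact : ∀ z, z ≠ i → ExactAt (pullback (fun z : HalfPlane => ρ z) (rayCochain 1)) z :=
    fun z hz => (exactAt_rayCochain fun h => hz <|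
      Subtype.ext (ρ.injective (h.trans hρi.symm))).pullback (f := fun z : HalfPlane => ρ z)
        hρ.continuousAt
  refine ⟨pullback (fun z : HalfPlane => ρ z) (rayCochain 1),
    ⟨(finite_singleton i).subset fun z hz => not_imp_comm.1 (hexact z) hz, fun z hz => ?_⟩,
    fun z hz => ?_, funext fun z => ?_⟩
  · rw [not_imp_comm.1 (hexact z) hz]
    exact mem_manifoldInterior_of_im_pos (OpenPartialHomeomorph.refl _) (mem_univ i) one_pos
  · refine AgreeAt.pullback (ψ := 0) (vanishesAt_rayCochain ?_) hρ.continuousAt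
    contrapose! hz
    simpa [Complex.mem_reProdIm, hre, him, z.2] using hz.symm
  · rcases eq_or_ne z i with rfl | hz
    · rw [Pi.single_eq_same]
      have hi : i ∈ (HalfPlane.inclusion.transHomeomorph ρ).source := one_pos (α := ℝ)
      refine (residue_pullback _ (rayCochain 1) hi).trans ?_
      change residue _ (ρ i) = 1
      rw [hρi, residue_rayCochain, Pi.single_eq_same]
    · rw [(hexact z hz).residue_eq_zero, Pi.single_eq_of_ne hz]

section EndCochain

variable [T2Space X] [CompactSpace X]

open Classical in
lemma exists_end_cochain_of_chart (e : OpenPartialHomeomorph X HalfPlane) (he : e.target = univ)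
    {x : X} (hx : x ∈ e.source) (h0 : e x = ⟨0, le_rfl⟩) : ∃ φ : Cochain X, IsMeromorphic φ ∧
      (∃ a ∈ e.source ∩ manifoldInterior X, residue φ = Pi.single a 1) ∧
      ∀ y, ¬ VanishesAt φ y → y ∈ e.source ∧ (y ∈ manifoldInterior X ∨ y = x) := by
  obtain ⟨ψ, hψ, hvan, hres⟩ := exists_halfPlane_end_cochain
  let i : HalfPlane := ⟨Complex.I, zero_le_one⟩
  have hK : IsCompact (Subtype.val ⁻¹' ({0} ×ℂ Icc (0 : ℝ) 1) : Set HalfPlane) :=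
    (isClosed_le continuous_const Complex.continuous_im).isClosedEmbedding_subtypeVal
      |>.isCompact_preimage (isCompact_singleton.reProdIm isCompact_Icc)
  obtain ⟨φ, hφ⟩ := exists_isExtension e hK (he ▸ subset_univ _) hvan
  have hi : i ∈ e.target := he ▸ mem_univ i
  have ha : e.symm i ∈ e.source := e.map_target hi
  refine ⟨φ, hφ.isMeromorphic hψ, ⟨e.symm i, ⟨ha, ?_⟩, funext fun y => ?_⟩, fun y hy => ?_⟩
  · exact mem_manifoldInterior_of_im_pos e ha (by rw [e.right_inv hi]; exact one_pos)
  · by_cases hye : y ∈ e.source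
    · rw [hφ.residue_eq hye, hres, Pi.single_apply, Pi.single_apply]
      exact if_congr (e.eq_symm_apply hye hi).symm rfl rfl
    · rw [hφ.residue_eq_zero hye, Pi.single_eq_of_ne (ne_of_mem_of_not_mem ha hye).symm]
  · have hye : y ∈ e.source := not_imp_comm.1 (hφ.vanishesAt_of_notMem y) hy
    refine ⟨hye, or_iff_not_imp_left.2 fun hyI => e.injOn hye hx (h0 ▸ Subtype.ext ?_)⟩
    have hey : e y ∈ Subtype.val ⁻¹' ({0} ×ℂ Icc (0 : ℝ) 1) :=
      not_imp_comm.1 (hvan (e y)) fun h => hy (hφ.vanishesAt fun _ => h)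
    exact Complex.ext hey.1 (im_eq_zero_of_mem_manifoldBoundary e hye hyI)

lemma mem_manifoldInterior_iff_im_pos (e : OpenPartialHomeomorph X HalfPlane) {x : X}
    (hx : x ∈ e.source) : x ∈ manifoldInterior X ↔ 0 < (e x).1.im := by
  refine ⟨fun hI => lt_of_le_of_ne (e x).2 fun h0 => ?_, mem_manifoldInterior_of_im_pos e hx⟩
  obtain ⟨e', he', hxe', hx0, -⟩ := exists_centered_halfPlane_chart e hx h0.symm univ_mem
  obtain ⟨φ, hφ, ⟨a, -, hres⟩, hsupp⟩ := exists_end_cochain_of_chart e' he' hxe' hx0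
  refine hφ.residue_ne_single (fun y hy => ?_) a hres
  by_contra hyv
  exact hy ((hsupp y hyv).2.elim id fun h => h ▸ hI)

open Classical in
lemma exists_end_cochain (hX : LocallyHalfPlane X) {x : X}
    (hx : x ∈ manifoldBoundary X) {N : Set X} (hN : N ∈ 𝓝 x) : ∃ φ : Cochain X, IsMeromorphic φ ∧
      (∃ a ∈ N ∩ manifoldInterior X, residue φ = Pi.single a 1) ∧
      ∀ y, ¬ VanishesAt φ y → y ∈ N ∧ (y ∈ manifoldInterior X ∨ y = x) := by
  obtain ⟨e, he, hxe, hx0, heN⟩ := hX.exists_boundary_chart hx hN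
  obtain ⟨φ, hφ, ⟨a, ha, hres⟩, hsupp⟩ := exists_end_cochain_of_chart e he hxe hx0
  exact ⟨φ, hφ, ⟨a, ⟨heN ha.1, ha.2⟩, hres⟩, fun y hy => ⟨heN (hsupp y hy).1, (hsupp y hy).2⟩⟩

lemma dense_manifoldInterior (hX : LocallyHalfPlane X) :
    Dense (manifoldInterior X) := fun x => by
  by_cases hx : x ∈ manifoldInterior X
  · exact subset_closure hx
  · refine mem_closure_iff_nhds.2 fun N hN => ?_
    obtain ⟨-, -, ⟨a, ha, -⟩, -⟩ := exists_end_cochain hX hx hN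
    exact ⟨a, ha⟩

end EndCochain

section Linked

open Classical in
/-- Two points are linked in `O` if they are the endpoints of an arc in the interior of the surface
inside `O`; the arc enters only through its dual cochain, supported on the arc and with residues at
its endpoints. -/
def Linked (O : Set X) (a b : X) : Prop := ∃ φ : Cochain X, IsMeromorphic φ ∧
  (∀ x, ¬ VanishesAt φ x → x ∈ O ∩ manifoldInterior X) ∧ residue φ = Pi.single a 1 + Pi.single b 1

lemma Linked.mono {O O' : Set X} {a b : X} (h : Linked O a b) (hO : O ⊆ O') : Linked O' a b := by
  obtain ⟨φ, hφ, hsupp, hres⟩ := h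
  exact ⟨φ, hφ, fun x hx => ⟨hO (hsupp x hx).1, (hsupp x hx).2⟩, hres⟩

lemma Linked.trans [T1Space X] {O : Set X} {a b c : X} (h : Linked O a b) (h' : Linked O b c) :
    Linked O a c := by
  obtain ⟨φ, hφ, hsupp, hres⟩ := h
  obtain ⟨ψ, hψ, hsupp', hres'⟩ := h'
  classical
  refine ⟨φ + ψ, hφ.add hψ, fun x hx => ?_, funext fun x => ?_⟩
  · by_cases h : VanishesAt φ x
    · exact hsupp' x fun h' => hx (h.add h')
    · exact hsupp x h
  · rw [hφ.residue_add hψ, hres, hres', ← Pi.add_apply, ← add_assoc, add_assoc (Pi.single a 1),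
      ZModModule.add_self, add_zero]

variable [T2Space X] [CompactSpace X]

open Classical in
lemma linked_of_chart (e : OpenPartialHomeomorph X ℂ) (he : Convex ℝ e.target) {a b : X}
    (ha : a ∈ e.source) (hb : b ∈ e.source) : Linked e.source a b := by
  obtain ⟨ψ, hψ, hvan, hres⟩ := exists_segment_cochain (e a) (e b)
  have hK : IsCompact (segment ℝ (e a) (e b)) := by
    rw [segment_eq_image']
    exact isCompact_Icc.image (by fun_prop)
  obtain ⟨φ, hφ⟩ := exists_isExtension e hK
    (he.segment_subset (e.map_source ha) (e.map_source hb)) hvan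
  refine ⟨φ, hφ.isMeromorphic hψ, fun x hx => ?_, funext fun x => ?_⟩
  · have hxe : x ∈ e.source := not_imp_comm.1 (hφ.vanishesAt_of_notMem x) hx
    exact ⟨hxe, source_subset_manifoldInterior e hxe⟩
  · simp only [Pi.add_apply, Pi.single_apply]
    by_cases hx : x ∈ e.source
    · rw [hφ.residue_eq hx, hres]
      simp only [Pi.add_apply, Pi.single_apply]
      exact congr_arg₂ _ (if_congr (e.injOn.eq_iff hx ha) rfl rfl)
        (if_congr (e.injOn.eq_iff hx hb) rfl rfl)
    · rw [hφ.residue_eq_zero hx, if_neg (ne_of_mem_of_not_mem ha hx).symm,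
        if_neg (ne_of_mem_of_not_mem hb hx).symm, add_zero]

lemma exists_nhds_linked (hX : LocallyHalfPlane X) {O : Set X} {x : X}
    (hO : O ∈ 𝓝 x) :
    ∃ V ∈ 𝓝 x, ∀ a ∈ V ∩ manifoldInterior X, ∀ b ∈ V ∩ manifoldInterior X, Linked O a b := by
  by_cases hx : x ∈ manifoldInterior X
  · obtain ⟨e, he, hxe, -, heO⟩ := exists_disc_chart hx hO
    exact ⟨e.source, e.open_source.mem_nhds hxe, fun a ha b hb =>
      (linked_of_chart e (he ▸ convex_univ) ha.1 hb.1).mono heO⟩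
  · obtain ⟨e, he, hxe, -, heO⟩ := hX.exists_boundary_chart hx hO
    have hconv : Convex ℝ (e.trans HalfPlane.inclusion).target := by
      rw [OpenPartialHomeomorph.trans_target, he, preimage_univ, inter_univ]
      exact convex_halfSpace_im_gt 0
    have hsource : ∀ a ∈ e.source ∩ manifoldInterior X, a ∈ (e.trans HalfPlane.inclusion).source :=
      fun a ha => ⟨ha.1, (mem_manifoldInterior_iff_im_pos e ha.1).1 ha.2⟩
    exact ⟨e.source, e.open_source.mem_nhds hxe, fun a ha b hb =>
      (linked_of_chart _ hconv (hsource a ha) (hsource b hb)).mono fun y hy => heO hy.1⟩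

theorem linked_of_isPreconnected (hX : LocallyHalfPlane X) {O : Set X}
    (hO : IsOpen O) (hc : IsPreconnected O) {a b : X} (ha : a ∈ O ∩ manifoldInterior X)
    (hb : b ∈ O ∩ manifoldInterior X) : Linked O a b := by
  let P (x y : X) : Prop := ∀ᶠ a in 𝓝[manifoldInterior X] x, ∀ᶠ b in 𝓝[manifoldInterior X] y,
    Linked O a b
  suffices P a b from (this.self_of_nhdsWithin ha.2).self_of_nhdsWithin hb.2
  refine hc.induction₂' P (fun x hx => ?_) (fun x y z _ _ _ hxy hyz => ?_) ha.1 hb.1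
  · obtain ⟨V, hV, hlink⟩ := exists_nhds_linked hX (hO.mem_nhds hx)
    have hself : ∀ {y}, V ∈ 𝓝 y → V ∩ manifoldInterior X ∈ 𝓝[manifoldInterior X] y := fun h =>
      inter_mem (mem_nhdsWithin_of_mem_nhds h) self_mem_nhdsWithin
    filter_upwards [mem_nhdsWithin_of_mem_nhds (eventually_mem_nhds_iff.2 hV)] with y hy
    constructor
    · filter_upwards [hself hV] with a ha
      filter_upwards [hself hy] with b hb using hlink a ha b hb
    · filter_upwards [hself hy] with a ha
      filter_upwards [hself hV] with b hb using hlink a ha b hb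
  · have : (𝓝[manifoldInterior X] y).NeBot :=
      mem_closure_iff_nhdsWithin_neBot.1 (dense_manifoldInterior hX y)
    filter_upwards [hxy] with a hac
    obtain ⟨c, hc, hcb⟩ := (hac.and hyz).exists
    filter_upwards [hcb] with b hb using hc.trans hb

end Linked

end Cochain

/-- The standing situation of Youngs' theorem: a continuous monotone surjection of a surface onto a
homeomorphic copy of itself. Separation, compactness and local connectedness are separate instance
arguments. -/
structure MonotoneSurfaceMap (h : X → Y) : Prop where
  locallyHalfPlane : LocallyHalfPlane X
  nonempty_homeomorph : Nonempty (X ≃ₜ Y)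
  continuous : Continuous h
  surjective : Function.Surjective h
  isPreconnected_fiber : ∀ y, IsPreconnected (h ⁻¹' {y})

namespace Cochain

section Bridge

lemma exists_h1Trivial_nhds (hX : LocallyHalfPlane X) (x : X) :
    ∃ U, IsOpen U ∧ x ∈ U ∧ H1Trivial U := by
  by_cases hx : x ∈ manifoldInterior X
  · obtain ⟨e, he, hxe, -⟩ := exists_disc_chart hx univ_mem
    exact ⟨e.source, e.open_source, hxe, h1Trivial_source h1Trivial_univ_complex e he⟩
  · obtain ⟨e, he, hxe, -⟩ := hX.exists_boundary_chart hx univ_mem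
    exact ⟨e.source, e.open_source, hxe, h1Trivial_source h1Trivial_univ_halfPlane e he⟩

lemma IsMeromorphic.exists_normalization [RegularSpace X] {φ : Cochain X} (hφ : IsMeromorphic φ) :
    ∃ φ', IsMeromorphic φ' ∧ (∀ x, ExactAt φ x → AgreeAt φ' φ x) ∧ residue φ' = residue φ ∧
      ∀ x, residue φ x = 0 → ExactAt φ' x := by
  obtain ⟨φ', hS, hSc⟩ := exists_exactAt_of_forall_removableAt
    (S := {x | ¬ ExactAt φ x ∧ residue φ x = 0}) (hφ.finite_singularities.subset fun _ h => h.1)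
    fun p hp => residue_eq_zero_iff.1 hp.2
  have hagree : ∀ x, ExactAt φ x → AgreeAt φ' φ x := fun x hx => hSc x fun h => h.1 hx
  have hsing : ∀ x, ¬ ExactAt φ' x → ¬ ExactAt φ x := fun x hx h => hx ((hagree x h).exactAt h)
  refine ⟨φ', ⟨hφ.finite_singularities.subset hsing, fun x hx => hφ.mem_manifoldInterior x
    (hsing x hx)⟩, hagree, funext fun x => ?_, fun x hx => ?_⟩
  · by_cases hx : ¬ ExactAt φ x ∧ residue φ x = 0
    · rw [hx.2, (hS x hx).residue_eq_zero]
    · exact (hSc x hx).residue_eq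
  · by_cases h : ExactAt φ x
    · exact (hagree x h).exactAt h
    · exact hS x ⟨h, hx⟩

open Classical in
/-- `ψ` is dual to an arc in `O` joining the boundary points `x` and `x'`, and `φ` to an initial
piece of that arc, from `x` to an interior point. -/
structure IsBridge (O : Set X) (x x' : X) (φ ψ : Cochain X) : Prop where
  isMeromorphic : IsMeromorphic φ
  exists_residue_eq : ∃ a, residue φ = Pi.single a 1
  vanishesAt_of_ne : ∀ y ∈ manifoldBoundary X, y ≠ x → VanishesAt φ y
  exactAt : ∀ y, ExactAt ψ y
  vanishesAt_of_notMem : ∀ y ∉ O, VanishesAt ψ y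
  agreeAt_of_ne : ∀ y ∈ manifoldBoundary X, y ≠ x' → AgreeAt ψ φ y

variable [T2Space X] [CompactSpace X]

lemma exists_isBridge (hX : LocallyHalfPlane X) {O : Set X} (hO : IsOpen O)
    (hc : IsPreconnected O) {x x' : X} (hx : x ∈ O ∩ manifoldBoundary X)
    (hx' : x' ∈ O ∩ manifoldBoundary X) : ∃ φ ψ, IsBridge O x x' φ ψ := by
  obtain ⟨φ, hφ, ⟨a, ha, hra⟩, hsupp⟩ := exists_end_cochain hX hx.2 (hO.mem_nhds hx.1)
  obtain ⟨φ', hφ', ⟨a', ha', hra'⟩, hsupp'⟩ := exists_end_cochain hX hx'.2 (hO.mem_nhds hx'.1)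
  obtain ⟨l, hl, hlsupp, hlr⟩ := linked_of_isPreconnected hX hO hc ha ha'
  obtain ⟨ψ, -, hagree, -, hexact⟩ := (hφ.add (hl.add hφ')).exists_normalization
  have hvan : ∀ y ∈ manifoldBoundary X, y ≠ x → VanishesAt φ y := fun y hy hne =>
    not_imp_comm.1 (hsupp y) fun h => h.2.elim hy hne
  have hvan' : ∀ y ∈ manifoldBoundary X, y ≠ x' → VanishesAt φ' y := fun y hy hne =>
    not_imp_comm.1 (hsupp' y) fun h => h.2.elim hy hne
  refine ⟨φ, ψ, hφ, ⟨a, hra⟩, hvan, fun y => hexact y ?_, fun y hy => ?_, fun y hy hne => ?_⟩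
  · rw [hφ.residue_add (hl.add hφ'), hl.residue_add hφ', hra, hra', hlr, Pi.add_apply,
      add_assoc, CharTwo.add_self_eq_zero, add_zero, CharTwo.add_self_eq_zero]
  · have hv := (not_imp_comm.1 (hsupp y) fun h => hy h.1).add
      ((not_imp_comm.1 (hlsupp y) fun h => hy h.1).add (not_imp_comm.1 (hsupp' y) fun h => hy h.1))
    exact (hagree y hv.exactAt).trans hv
  · have hexact : ExactAt (φ + (l + φ')) y :=
      not_imp_comm.1 ((hφ.add (hl.add hφ')).mem_manifoldInterior y) hy
    refine (hagree y hexact).trans ?_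
    rw [add_comm]
    exact agreeAt_add_right_iff.2
      ((not_imp_comm.1 (hlsupp y) fun h => hy h.2).add (hvan' y hy hne))

lemma IsBridge.mem_of_primitive {O N : Set X} {x x' : X} {φ ψ : Cochain X} {f : X → ZMod 2}
    (hb : IsBridge O x x' φ ψ) (hN : IsOpen N) (hx : x ∈ N)
    (hf : ∀ y ∈ manifoldBoundary X, y ∈ N → HasPrimitiveAt ψ f y)
    (hf0 : ∀ y ∈ manifoldBoundary X, y ∈ frontier N → ∀ᶠ z in 𝓝 y, f z = 0) : x' ∈ N := by
  by_contra hx'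
  obtain ⟨a, ha⟩ := hb.exists_residue_eq
  have hδ := isMeromorphic_of_forall_exactAt fun z =>
    (⟨_, hasPrimitiveAt_coboundary (N.indicator f) z⟩ : ExactAt (coboundary (N.indicator f)) z)
  refine (hb.isMeromorphic.add hδ).residue_ne_single (fun y hy => ?_) a (funext fun y => ?_)
  · by_cases hyN : y ∈ N
    · have hφ : HasPrimitiveAt φ f y :=
        (hb.agreeAt_of_ne y hy (ne_of_mem_of_not_mem hyN hx')).symm.trans (hf y hy hyN)
      refine vanishesAt_add_iff.2 (hφ.congr ?_)
      filter_upwards [hN.mem_nhds hyN] with z hz using (indicator_of_mem hz f).symm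
    · refine (hb.vanishesAt_of_ne y hy (ne_of_mem_of_not_mem hx hyN).symm).add ?_
      suffices ∀ᶠ z in 𝓝 y, N.indicator f z = 0 from
        vanishesAt_coboundary_of_mem_nhds this fun _ => id
      by_cases hyc : y ∈ closure N
      · filter_upwards [hf0 y hy (hN.frontier_eq ▸ ⟨hyc, hyN⟩)] with z hz
        exact indicator_apply_eq_zero.2 fun _ => hz
      · filter_upwards [isClosed_closure.isOpen_compl.mem_nhds hyc] with z hz
        exact indicator_of_notMem (fun hzN => hz (subset_closure hzN)) f
  · rw [hb.isMeromorphic.residue_add hδ, ha,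
      ExactAt.residue_eq_zero ⟨_, hasPrimitiveAt_coboundary _ y⟩, add_zero]

end Bridge

end Cochain

section ChartPreimages

variable (e : OpenPartialHomeomorph X M) (he : e.target = univ) {A : Set M}

include he

lemma source_inter_preimage_eq_image : e.source ∩ e ⁻¹' A = e.symm '' A :=
  (e.symm_image_eq_source_inter_preimage (he ▸ subset_univ A)).symm

lemma continuous_chart_symm : Continuous e.symm := by
  rw [← continuousOn_univ, ← he]
  exact e.continuousOn_symm

lemma isPreconnected_source_inter_preimage (hA : IsPreconnected A) :
    IsPreconnected (e.source ∩ e ⁻¹' A) :=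
  source_inter_preimage_eq_image e he ▸ hA.image _ (continuous_chart_symm e he).continuousOn

lemma isClosed_source_inter_preimage [T2Space X] (hA : IsCompact A) :
    IsClosed (e.source ∩ e ⁻¹' A) :=
  source_inter_preimage_eq_image e he ▸ (hA.image (continuous_chart_symm e he)).isClosed

end ChartPreimages

namespace MonotoneSurfaceMap

open Cochain

variable {h : X → Y}

lemma isPreconnected_preimage [CompactSpace X] [T2Space Y] (S : MonotoneSurfaceMap h)
    {A : Set Y} (hA : IsPreconnected A) : IsPreconnected (h ⁻¹' A) :=
  isPreconnected_preimage_of_monotone S.continuous.isClosedMap S.surjective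
    S.isPreconnected_fiber hA

lemma exists_nhds_preimage_subset [CompactSpace X] [T2Space Y] (S : MonotoneSurfaceMap h) {y : Y}
    {O : Set X} (hO : IsOpen O) (hyO : h ⁻¹' {y} ⊆ O) : ∃ G ∈ 𝓝 y, h ⁻¹' G ⊆ O :=
  mem_comap.1 (S.continuous.isClosedMap.comap_nhds_le (hO.mem_nhdsSet.2 hyO))

lemma locallyHalfPlane_codomain (S : MonotoneSurfaceMap h) : LocallyHalfPlane Y := fun y => by
  obtain ⟨g⟩ := S.nonempty_homeomorph
  obtain ⟨e, he⟩ := S.locallyHalfPlane (g.symm y)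
  exact ⟨g.symm.transOpenPartialHomeomorph e, by simpa using he⟩

variable [T2Space X] [CompactSpace X]

lemma exists_primitive_preimage [LocallyConnectedSpace X] (S : MonotoneSurfaceMap h)
    {φ : Cochain X} (hφ : ∀ x, ExactAt φ x) {W : Set Y} (hW : H1Trivial W) :
    ExactOn φ (h ⁻¹' W) := by
  obtain ⟨g⟩ := S.nonempty_homeomorph
  obtain ⟨ψ, hψ, hsum⟩ := exists_cocycle_pullback_cohomologous
    (exists_h1Trivial_nhds S.locallyHalfPlane) g S.continuous S.surjective S.isPreconnected_fiber hφ
  have := (hsum.mono (subset_univ _)).add ((hW ψ fun y _ => hψ y).pullback S.continuous)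
  rwa [add_assoc, ZModModule.add_self, add_zero] at this

variable [T2Space Y]

/-- If two boundary points over `E` were separated by the boundary of `B`, the arc joining them over
`E` could be cut there, leaving a cochain with a single residue. -/
lemma mem_of_chart [LocallyConnectedSpace X] (S : MonotoneSurfaceMap h)
    (e : OpenPartialHomeomorph Y M) (he : e.target = univ) (hM : H1Trivial (univ : Set M))
    {E D : Set M} (hE : IsOpen E) (hEc : IsPreconnected E) (hED : E ⊆ D) (hD : IsCompact D)
    (hDc : IsPreconnected Dᶜ) {B : Set X} (hB : IsOpen B)
    (hBD : ∀ y ∈ manifoldBoundary X, y ∈ frontier B → h y ∉ e.source ∩ e ⁻¹' D) {x x' : X}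
    (hx : x ∈ manifoldBoundary X) (hxE : h x ∈ e.source ∩ e ⁻¹' E) (hxB : x ∈ B)
    (hx' : x' ∈ manifoldBoundary X) (hxE' : h x' ∈ e.source ∩ e ⁻¹' E) : x' ∈ B := by
  obtain ⟨φ, ψ, hb⟩ := exists_isBridge S.locallyHalfPlane
    ((e.isOpen_inter_preimage hE).preimage S.continuous)
    (S.isPreconnected_preimage (isPreconnected_source_inter_preimage e he hEc)) ⟨hxE, hx⟩
    ⟨hxE', hx'⟩
  obtain ⟨f, hf⟩ := S.exists_primitive_preimage hb.exactAt (h1Trivial_source hM e he)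
  have hvan : ∀ z ∈ h ⁻¹' (e.source ∩ e ⁻¹' Dᶜ), HasPrimitiveAt ψ 0 z := fun z hz => by
    rw [HasPrimitiveAt, coboundary_zero]
    exact hb.vanishesAt_of_notMem z fun hzE => hz.2 (hED hzE.2)
  obtain ⟨k, hk⟩ := exists_primitive_add_eq_const
    (S.isPreconnected_preimage (isPreconnected_source_inter_preimage e he hDc))
    (fun z hz => hf z hz.1) hvan
  have hDcl := isClosed_source_inter_preimage e he hD
  obtain ⟨V, hV, hDV, hVW⟩ := normal_exists_closure_subset (hDcl.preimage S.continuous)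
    (e.open_source.preimage S.continuous) (preimage_mono inter_subset_left)
  suffices x' ∈ B ∩ V from this.1
  refine hb.mem_of_primitive (f := fun z => f z + k) (hB.inter hV) ⟨hxB, hDV ⟨hxE.1, hED hxE.2⟩⟩
    (fun y _ hyN => (hf y (hVW (subset_closure hyN.2))).add_const k) fun y hy hyN => ?_
  rw [(hB.inter hV).frontier_eq] at hyN
  have hyW : h y ∈ e.source := hVW (closure_mono inter_subset_right hyN.1)
  have hyD : h y ∉ e.source ∩ e ⁻¹' D := fun hyD => hBD y hy (hB.frontier_eq ▸
    ⟨closure_mono inter_subset_left hyN.1, fun hyB => hyN.2 ⟨hyB, hDV hyD⟩⟩) hyD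
  filter_upwards [((e.open_source.sdiff hDcl).preimage S.continuous).mem_nhds ⟨hyW, hyD⟩] with z hz
  rw [← hk z ⟨hz.1, fun hzD => hz.2 ⟨hz.1, hzD⟩⟩, Pi.zero_apply, add_zero,
    CharTwo.add_self_eq_zero]

end MonotoneSurfaceMap

namespace HalfPlane

/-- The points of the half-plane with real part in `s` and imaginary part in `t`. -/
def rect (s t : Set ℝ) : Set HalfPlane := {z | z.1.re ∈ s ∧ z.1.im ∈ t}

lemma isOpen_rect {s t : Set ℝ} (hs : IsOpen s) (ht : IsOpen t) : IsOpen (rect s t) :=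
  (hs.reProdIm ht).preimage continuous_subtype_val

lemma isPreconnected_rect {s t : Set ℝ} (hs : Convex ℝ s) (ht : Convex ℝ t) :
    IsPreconnected (rect s t) := by
  have hconv : Convex ℝ (Complex.reLm ⁻¹' s ∩ Complex.imLm ⁻¹' (t ∩ Ici 0)) :=
    (hs.linear_preimage _).inter ((ht.inter (convex_Ici 0)).linear_preimage _)
  convert hconv.isPreconnected.image retract continuous_retract.continuousOn using 1
  ext z
  refine ⟨fun hz => ⟨z, ⟨hz.1, hz.2, z.2⟩, leftInverse_retract z⟩, ?_⟩
  rintro ⟨w, ⟨hws, hwt, hw0⟩, rfl⟩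
  rw [rect, mem_ofPred_eq, coe_retract hw0]
  exact ⟨hws, hwt⟩

lemma isCompact_rect {s : Set ℝ} (hs : IsCompact s) (r : ℝ) : IsCompact (rect s (Iic r)) := by
  have hval : IsClosedEmbedding ((↑) : HalfPlane → ℂ) :=
    (isClosed_le continuous_const Complex.continuous_im).isClosedEmbedding_subtypeVal
  have hpre : rect s (Iic r) = (↑) ⁻¹' (s ×ℂ Icc 0 r) :=
    ext fun z => ⟨fun hz => ⟨hz.1, z.2, hz.2⟩, fun hz => ⟨hz.1, hz.2.2⟩⟩
  exact hpre ▸ hval.isCompact_preimage (hs.reProdIm isCompact_Icc)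

/-- The relatively open half-disc of radius `r`, in the sup norm. -/
def box (r : ℝ) : Set HalfPlane := rect (Ioo (-r) r) (Iio r)

/-- The closed half-disc of radius `r`, in the sup norm. -/
def closedBox (r : ℝ) : Set HalfPlane := rect (Icc (-r) r) (Iic r)

lemma isOpen_box (r : ℝ) : IsOpen (box r) := isOpen_rect isOpen_Ioo isOpen_Iio

lemma isPreconnected_box (r : ℝ) : IsPreconnected (box r) :=
  isPreconnected_rect (convex_Ioo _ _) (convex_Iio _)

lemma box_subset_closedBox (r : ℝ) : box r ⊆ closedBox r := fun _ hz =>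
  ⟨Ioo_subset_Icc_self hz.1, Iio_subset_Iic_self hz.2⟩

lemma closedBox_subset_box {r r' : ℝ} (hr : r < r') : closedBox r ⊆ box r' := fun _ hz =>
  ⟨⟨(neg_lt_neg hr).trans_le hz.1.1, hz.1.2.trans_lt hr⟩, hz.2.trans_lt hr⟩

lemma isCompact_closedBox (r : ℝ) : IsCompact (closedBox r) := isCompact_rect isCompact_Icc r

lemma isPreconnected_compl_closedBox {r : ℝ} (hr : 0 ≤ r) : IsPreconnected (closedBox r)ᶜ := by
  have hunion : (closedBox r)ᶜ =
      rect (Iio (-r)) univ ∪ rect univ (Ioi r) ∪ rect (Ioi r) univ := by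
    ext z
    simp only [closedBox, rect, mem_compl_iff, mem_union, mem_ofPred_eq, mem_Icc, mem_Iic, mem_Iio,
      mem_Ioi, mem_univ]
    grind
  have htop := isPreconnected_rect convex_univ (convex_Ioi r)
  rw [hunion]
  refine .union ⟨⟨r + 1, r + 1⟩, add_nonneg hr zero_le_one⟩ ?_ ?_
    (.union ⟨⟨-r - 1, r + 1⟩, add_nonneg hr zero_le_one⟩ ?_ ?_
      (isPreconnected_rect (convex_Iio _) convex_univ) htop)
    (isPreconnected_rect (convex_Ioi _) convex_univ) <;>
  simp [rect]

lemma mem_box_of_eq_zero {z : HalfPlane} (hz : z = ⟨0, le_rfl⟩) {r : ℝ} (hr : 0 < r) :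
    z ∈ box r := by
  simp [hz, box, rect, hr]

end HalfPlane

namespace MonotoneSurfaceMap

open Cochain HalfPlane

variable [T2Space X] [CompactSpace X] [T2Space Y] {h : X → Y}

theorem isPreconnected_fiber_inter_manifoldBoundary [LocallyConnectedSpace X]
    (S : MonotoneSurfaceMap h) {y : Y} (hy : y ∈ manifoldBoundary Y) :
    IsPreconnected (h ⁻¹' {y} ∩ manifoldBoundary X) := by
  have hcl : IsClosed (h ⁻¹' {y} ∩ manifoldBoundary X) :=
    (isClosed_singleton.preimage S.continuous).inter isOpen_manifoldInterior.isClosed_compl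
  rw [isPreconnected_iff_subset_of_fully_disjoint_closed hcl]
  intro u v hu hv huv hd
  by_contra! hcon
  obtain ⟨⟨x, hx, hxu⟩, x', hx', hxv⟩ := And.imp not_subset.1 not_subset.1 hcon
  obtain ⟨P, Q, hP, hQ, huP, hvQ, hPQ⟩ := normal_separation hu hv hd
  obtain ⟨G, hG, hGO⟩ := S.exists_nhds_preimage_subset (y := y)
    ((hP.union hQ).union isOpen_manifoldInterior) fun z hz => by
      by_cases hzI : z ∈ manifoldInterior X
      · exact .inr hzI
      · exact .inl ((huv ⟨hz, hzI⟩).imp (@huP z) (@hvQ z))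
  obtain ⟨e, he, hye, hey, heG⟩ := S.locallyHalfPlane_codomain.exists_boundary_chart hy hG
  have hE : ∀ z ∈ h ⁻¹' {y}, h z ∈ e.source ∩ e ⁻¹' box 1 := fun z hz => by
    rw [show h z = y from hz]
    exact ⟨hye, mem_box_of_eq_zero hey one_pos⟩
  have hmem : x ∈ P := S.mem_of_chart e he h1Trivial_univ_halfPlane (isOpen_box 1)
    (isPreconnected_box 1) (box_subset_closedBox 1) (isCompact_closedBox 1)
    (isPreconnected_compl_closedBox zero_le_one) hP
    (fun z hz hzP hzD => by
      rw [hP.frontier_eq] at hzP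
      rcases hGO (heG hzD.1) with (hzP' | hzQ) | hzI
      · exact hzP.2 hzP'
      · exact disjoint_left.1 (hPQ.closure_left hQ) hzP.1 hzQ
      · exact hz hzI)
    hx'.2 (hE x' hx'.1) (huP ((huv hx').resolve_right hxv)) hx.2 (hE x hx.1)
  exact disjoint_left.1 hPQ hmem (hvQ ((huv hx).resolve_left hxu))

end MonotoneSurfaceMap

namespace Cochain

open Classical in
lemma Linked.exists_exactAt [RegularSpace X] {O : Set X} {a b : X} (h : Linked O a b) :
    ∃ φ : Cochain X, IsMeromorphic φ ∧ (∀ x ∉ O, VanishesAt φ x) ∧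
      residue φ = Pi.single a 1 + Pi.single b 1 ∧ ∀ x, x ≠ a → x ≠ b → ExactAt φ x := by
  obtain ⟨φ, hφ, hsupp, hres⟩ := h
  obtain ⟨φ', hφ', hagree, hres', hexact⟩ := hφ.exists_normalization
  refine ⟨φ', hφ', fun x hx => ?_, hres'.trans hres, fun x ha hb => hexact x ?_⟩
  · have hvan : VanishesAt φ x := not_imp_comm.1 (hsupp x) fun h => hx h.1
    exact (hagree x hvan.exactAt).trans hvan
  · simp [hres, Pi.single_eq_of_ne ha, Pi.single_eq_of_ne hb]

open Classical in
/-- An arc from a point of `N` to a point outside crosses the frontier of `N`. -/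
lemma IsMeromorphic.exists_mem_frontier [T2Space X] [CompactSpace X] {φ : Cochain X}
    (hφ : IsMeromorphic φ) {N : Set X} (hN : IsOpen N) (hNI : closure N ⊆ manifoldInterior X)
    {a b : X} (ha : a ∈ N) (hb : b ∉ N) (hres : residue φ = Pi.single a 1 + Pi.single b 1)
    (c : X → ZMod 2) : ∃ x ∈ frontier N, ¬ HasPrimitiveAt φ c x := by
  by_contra! hc
  have hδ (x : X) : ExactAt (coboundary c) x := ⟨c, hasPrimitiveAt_coboundary c x⟩
  have hsum : IsMeromorphic (φ + coboundary c) := hφ.add (isMeromorphic_of_forall_exactAt hδ)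
  have hin : ∀ x ∈ N, AgreeAt (cutoff N (φ + coboundary c)) (φ + coboundary c) x :=
    fun x hx => agreeAt_cutoff (hN.mem_nhds hx) _
  have hout : ∀ x ∉ N, VanishesAt (cutoff N (φ + coboundary c)) x := fun x hx =>
    vanishesAt_cutoff fun hxc => vanishesAt_add_iff.2 (hc x (hN.frontier_eq ▸ ⟨hxc, hx⟩))
  have hsing : ∀ x, ¬ ExactAt (cutoff N (φ + coboundary c)) x → ¬ ExactAt (φ + coboundary c) x :=
    fun x hx h => hx <| by
      by_cases hxN : x ∈ N
      · exact (hin x hxN).exactAt h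
      · exact (hout x hxN).exactAt
  have hcut : IsMeromorphic (cutoff N (φ + coboundary c)) :=
    ⟨hsum.finite_singularities.subset hsing, fun x hx => hsum.mem_manifoldInterior x (hsing x hx)⟩
  refine hcut.residue_ne_single
    (fun x hx => hout x fun hxN => hx (hNI (subset_closure hxN))) a (funext fun x => ?_)
  by_cases hxN : x ∈ N
  · rw [(hin x hxN).residue_eq, hφ.residue_add (isMeromorphic_of_forall_exactAt hδ),
      (hδ x).residue_eq_zero, hres, add_zero, Pi.add_apply,
      Pi.single_eq_of_ne (ne_of_mem_of_not_mem hxN hb), add_zero]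
  · rw [(hout x hxN).exactAt.residue_eq_zero,
      Pi.single_eq_of_ne (ne_of_mem_of_not_mem ha hxN).symm]

end Cochain

namespace HalfPlane

/-- A neighbourhood of an arc from the origin to `5 i` avoiding the right half of the half-annulus
`box 4 \ closedBox 1`. -/
def leftRoute : Set HalfPlane := box 1 ∪ rect (Iio (-1 / 2)) univ ∪ rect univ (Ioi 4)

/-- A neighbourhood of an arc from the origin to `5 i` avoiding the left half of the half-annulus
`box 4 \ closedBox 1`. -/
def rightRoute : Set HalfPlane := box 1 ∪ rect (Ioi (1 / 2)) univ ∪ rect univ (Ioi 4)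

lemma isOpen_leftRoute : IsOpen leftRoute :=
  ((isOpen_box 1).union (isOpen_rect isOpen_Iio isOpen_univ)).union
    (isOpen_rect isOpen_univ isOpen_Ioi)

lemma isOpen_rightRoute : IsOpen rightRoute :=
  ((isOpen_box 1).union (isOpen_rect isOpen_Ioi isOpen_univ)).union
    (isOpen_rect isOpen_univ isOpen_Ioi)

lemma isPreconnected_leftRoute : IsPreconnected leftRoute := by
  refine .union ⟨⟨-2, 5⟩, by norm_num⟩ ?_ ?_ (.union ⟨⟨-3 / 4, 1 / 2⟩, by norm_num⟩ ?_ ?_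
    (isPreconnected_box 1) (isPreconnected_rect (convex_Iio _) convex_univ))
    (isPreconnected_rect convex_univ (convex_Ioi _)) <;>
  norm_num [rect, box]

lemma isPreconnected_rightRoute : IsPreconnected rightRoute := by
  refine .union ⟨⟨2, 5⟩, by norm_num⟩ ?_ ?_ (.union ⟨⟨3 / 4, 1 / 2⟩, by norm_num⟩ ?_ ?_
    (isPreconnected_box 1) (isPreconnected_rect (convex_Ioi _) convex_univ))
    (isPreconnected_rect convex_univ (convex_Ioi _)) <;>
  norm_num [rect, box]

end HalfPlane

namespace MonotoneSurfaceMap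

open Cochain HalfPlane

variable [CompactSpace X] {h : X → Y}

lemma exists_primitive_of_residue_eq [T2Space X] [LocallyConnectedSpace X]
    (S : MonotoneSurfaceMap h) {φ ψ : Cochain X} (hφ : IsMeromorphic φ) (hψ : IsMeromorphic ψ)
    (hres : residue φ = residue ψ) {W : Set Y} (hW : H1Trivial W) :
    ∃ f, ∀ x, h x ∈ W → ExactAt φ x → ExactAt ψ x → HasPrimitiveAt (φ + ψ) f x := by
  obtain ⟨χ, -, hagree, -, hexact⟩ := (hφ.add hψ).exists_normalization
  obtain ⟨f, hf⟩ := S.exists_primitive_preimage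
    (fun x => hexact x (by rw [hφ.residue_add hψ, hres, CharTwo.add_self_eq_zero])) hW
  exact ⟨f, fun x hx hxφ hxψ => (hagree x (hxφ.add hxψ)).symm.trans (hf x hx)⟩

variable [T2Space Y]

/-- The half-annulus is the union of two pieces meeting in a connected set; over one of them `φ`
vanishes, over the other `ψ` does, so that `φ` is cohomologous to `φ + ψ`. -/
lemma exactOn_preimage_annulus (S : MonotoneSurfaceMap h) (e : OpenPartialHomeomorph Y HalfPlane)
    (he : e.target = univ) {φ ψ : Cochain X} {f : X → ZMod 2}
    (hφ : ∀ x, h x ∈ e.source ∩ e ⁻¹' leftRouteᶜ → VanishesAt φ x)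
    (hψ : ∀ x, h x ∈ e.source ∩ e ⁻¹' rightRouteᶜ → VanishesAt ψ x)
    (hf : ∀ x, h x ∈ e.source ∩ e ⁻¹' (box 4 \ closedBox 1) → HasPrimitiveAt (φ + ψ) f x) :
    ExactOn φ (h ⁻¹' (e.source ∩ e ⁻¹' (box 4 \ closedBox 1))) := by
  let R : Set HalfPlane := (box 4 \ closedBox 1) ∩ rect (Ioi (-1 / 2)) univ
  let L : Set HalfPlane := (box 4 \ closedBox 1) ∩ rect (Iio (1 / 2)) univ
  have hA : IsOpen (box 4 \ closedBox 1) := (isOpen_box 4).sdiff (isCompact_closedBox 1).isClosed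
  have hR : IsOpen R := hA.inter (isOpen_rect isOpen_Ioi isOpen_univ)
  have hL : IsOpen L := hA.inter (isOpen_rect isOpen_Iio isOpen_univ)
  have hRL : R ∩ L = rect (Ioo (-1 / 2) (1 / 2)) (Ioo 1 4) := by
    ext z
    simp only [R, L, box, closedBox, rect, mem_inter_iff, Set.mem_sdiff, mem_ofPred_eq, mem_Ioo,
      mem_Icc, mem_Iio, mem_Iic, mem_Ioi, mem_univ]
    grind
  have hcover : box 4 \ closedBox 1 ⊆ R ∪ L := fun z hz =>
    (lt_or_ge (-1 / 2) z.1.re).imp (fun h => ⟨hz, h, mem_univ _⟩)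
      fun h => ⟨hz, h.trans_lt (by norm_num), mem_univ _⟩
  have hRl : ∀ z ∈ R, z ∉ leftRoute := by
    simp only [R, leftRoute, box, closedBox, rect, mem_inter_iff, Set.mem_sdiff, mem_union,
      mem_ofPred_eq, mem_Ioo, mem_Icc, mem_Iio, mem_Iic, mem_Ioi, mem_univ]
    grind
  have hLr : ∀ z ∈ L, z ∉ rightRoute := by
    simp only [L, rightRoute, box, closedBox, rect, mem_inter_iff, Set.mem_sdiff, mem_union,
      mem_ofPred_eq, mem_Ioo, mem_Icc, mem_Iio, mem_Iic, mem_Ioi, mem_univ]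
    grind
  have hpre : IsPreconnected (h ⁻¹' (e.source ∩ e ⁻¹' (R ∩ L))) :=
    S.isPreconnected_preimage (isPreconnected_source_inter_preimage e he
      (hRL ▸ isPreconnected_rect (convex_Ioo _ _) (convex_Ioo _ _)))
  refine (ExactOn.union ((e.isOpen_inter_preimage hR).preimage S.continuous)
    ((e.isOpen_inter_preimage hL).preimage S.continuous)
    (by rwa [← preimage_inter, ← inter_inter_distrib_left, ← preimage_inter])
    (exactOn_of_vanishesAt fun x hx => hφ x ⟨hx.1, hRl _ hx.2⟩) ⟨f, fun x hx => ?_⟩).mono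
    fun x hx => (hcover hx.2).imp (⟨hx.1, ·⟩) (⟨hx.1, ·⟩)
  have := (agreeAt_add_right_iff (ψ := φ)).2 (hψ x ⟨hx.1, hLr _ hx.2⟩)
  rw [add_comm] at this
  exact this.symm.trans (hf x ⟨hx.1, hx.2.1⟩)

open Classical in
lemma exists_exactOn_preimage_annulus [T2Space X] [LocallyConnectedSpace X]
    (S : MonotoneSurfaceMap h) (e : OpenPartialHomeomorph Y HalfPlane) (he : e.target = univ)
    (hI : h ⁻¹' e.source ⊆ manifoldInterior X) {a b : X} (ha : h a ∈ e.source ∩ e ⁻¹' box 1)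
    (hb : h b ∈ e.source ∩ e ⁻¹' rect univ (Ioi 4)) :
    ∃ φ : Cochain X, IsMeromorphic φ ∧ residue φ = Pi.single a 1 + Pi.single b 1 ∧
      ExactOn φ (h ⁻¹' (e.source ∩ e ⁻¹' (box 4 \ closedBox 1))) := by
  have hlink {A : Set HalfPlane} (hA : IsOpen A) (hAc : IsPreconnected A) (haA : e (h a) ∈ A)
      (hbA : e (h b) ∈ A) : Linked (h ⁻¹' (e.source ∩ e ⁻¹' A)) a b :=
    linked_of_isPreconnected S.locallyHalfPlane ((e.isOpen_inter_preimage hA).preimage S.continuous)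
      (S.isPreconnected_preimage (isPreconnected_source_inter_preimage e he hAc))
      ⟨⟨ha.1, haA⟩, hI ha.1⟩ ⟨⟨hb.1, hbA⟩, hI hb.1⟩
  obtain ⟨φ, hφ, hφv, hφr, hφe⟩ := (hlink isOpen_leftRoute isPreconnected_leftRoute
    (.inl (.inl ha.2)) (.inr hb.2)).exists_exactAt
  obtain ⟨ψ, hψ, hψv, hψr, hψe⟩ := (hlink isOpen_rightRoute isPreconnected_rightRoute
    (.inl (.inl ha.2)) (.inr hb.2)).exists_exactAt
  obtain ⟨f, hf⟩ := S.exists_primitive_of_residue_eq hφ hψ (hφr.trans hψr.symm)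
    (h1Trivial_source h1Trivial_univ_halfPlane e he)
  refine ⟨φ, hφ, hφr, S.exactOn_preimage_annulus (f := f) e he (fun x hx => hφv x fun h => hx.2 h.2)
    (fun x hx => hψv x fun h => hx.2 h.2) fun x hx => ?_⟩
  have hxa : x ≠ a := by rintro rfl; exact hx.2.2 (box_subset_closedBox 1 ha.2)
  have hxb : x ≠ b := by rintro rfl; exact lt_asymm (mem_Ioi.1 hb.2.2) hx.2.1.2
  exact hf x hx.1 (hφe x hxa hxb) (hψe x hxa hxb)

theorem manifoldBoundary_subset_image [T2Space X] [LocallyConnectedSpace X]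
    (S : MonotoneSurfaceMap h) : manifoldBoundary Y ⊆ h '' manifoldBoundary X := by
  intro y hy
  by_contra! hcon
  obtain ⟨G, hG, hGO⟩ := S.exists_nhds_preimage_subset (y := y) isOpen_manifoldInterior
    fun z hz => not_not.1 fun hzb => hcon ⟨z, hzb, hz⟩
  obtain ⟨e, he, hye, hey, heG⟩ := S.locallyHalfPlane_codomain.exists_boundary_chart hy hG
  have hI : h ⁻¹' e.source ⊆ manifoldInterior X := (preimage_mono heG).trans hGO
  let top : HalfPlane := ⟨⟨0, 5⟩, by norm_num⟩
  have htop : top ∈ e.target := he ▸ mem_univ top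
  obtain ⟨a, rfl⟩ := S.surjective y
  obtain ⟨b, hb⟩ := S.surjective (e.symm top)
  have hbs : h b ∈ e.source ∩ e ⁻¹' {top} := by
    rw [hb]; exact ⟨e.map_target htop, e.right_inv htop⟩
  have hb4 : h b ∈ e.source ∩ e ⁻¹' rect univ (Ioi 4) :=
    ⟨hbs.1, by rw [mem_preimage, show e (h b) = top from hbs.2]; norm_num [top, rect]⟩
  obtain ⟨φ, hφ, hres, c, hc⟩ := S.exists_exactOn_preimage_annulus e he hI
    ⟨hye, mem_box_of_eq_zero hey one_pos⟩ hb4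
  have hN : IsOpen (h ⁻¹' (e.source ∩ e ⁻¹' box 2)) :=
    (e.isOpen_inter_preimage (isOpen_box 2)).preimage S.continuous
  have hcl : closure (h ⁻¹' (e.source ∩ e ⁻¹' box 2)) ⊆ h ⁻¹' (e.source ∩ e ⁻¹' closedBox 2) :=
    closure_minimal (fun x hx => ⟨hx.1, box_subset_closedBox 2 hx.2⟩)
      ((isClosed_source_inter_preimage e he (isCompact_closedBox 2)).preimage S.continuous)
  obtain ⟨x, hx, hxc⟩ := hφ.exists_mem_frontier hN (fun x hx => hI (hcl hx).1)
    ⟨hye, mem_box_of_eq_zero hey two_pos⟩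
    (fun h => (show (4 : ℝ) < 2 from hb4.2.2.trans h.2.2).not_ge (by norm_num)) hres c
  rw [hN.frontier_eq] at hx
  have hx2 := hcl hx.1
  exact hxc (hc x ⟨hx2.1, closedBox_subset_box (by norm_num) hx2.2,
    fun h => hx.2 ⟨hx2.1, closedBox_subset_box (by norm_num) h⟩⟩)

end MonotoneSurfaceMap

section PlaneHomeomorphisms

open Metric

lemma isPreconnected_compl_closedBall_complex {r : ℝ} (hr : 0 < r) :
    IsPreconnected (closedBall (0 : ℂ) r)ᶜ := by
  have hexp : (closedBall (0 : ℂ) r)ᶜ = Complex.exp '' {z | Real.log r < z.re} := by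
    ext z
    simp only [mem_compl_iff, mem_closedBall_zero_iff, not_le, mem_image, mem_ofPred_eq]
    constructor
    · intro hz
      refine ⟨Complex.log z, ?_, Complex.exp_log (norm_pos_iff.1 (hr.trans hz))⟩
      rw [Complex.log_re]
      exact Real.log_lt_log hr hz
    · rintro ⟨w, hw, rfl⟩
      rwa [Complex.norm_exp, ← Real.log_lt_iff_lt_exp hr]
  rw [hexp]
  exact (convex_halfSpace_re_gt _).isPreconnected.image _ Complex.continuous_exp.continuousOn

/-- The homeomorphism `x + i y ↦ x + i (y + p x)` of the plane. -/
noncomputable def shear (p : C(ℝ, ℝ)) : ℂ ≃ₜ ℂ where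
  toFun z := z + p z.re * Complex.I
  invFun z := z - p z.re * Complex.I
  left_inv z := by simp
  right_inv z := by simp

lemma exists_homeomorph_eq_of_injective_re {ι : Type*} [Finite ι] (w : ι → ℂ)
    (hw : Function.Injective fun i => (w i).re) (r : ι → ℝ) :
    ∃ Ψ : ℂ ≃ₜ ℂ, ∀ i, Ψ (w i) = ⟨(w i).re, r i⟩ := by
  classical
  have := Fintype.ofFinite ι
  let p := Lagrange.interpolate Finset.univ (fun i => (w i).re) fun i => r i - (w i).im
  refine ⟨shear p.toContinuousMap, fun i => Complex.ext ?_ ?_⟩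
  · simp [shear]
  · have hp : p.eval (w i).re = r i - (w i).im :=
      Lagrange.eval_interpolate_at_node _ hw.injOn (Finset.mem_univ i)
    simp [shear, hp]

/-- Normalize so that `k a = 0` and `k b = 1`, choose intermediate times at which the real part of
`k` is `1 / 3` and `2 / 3`, and shear the four points up or down. -/
lemma exists_homeomorph_alternating {k : ℝ → ℂ} (hk : Continuous k) {a b : ℝ}
    (hne : k a ≠ k b) : ∃ (Ψ : ℂ ≃ₜ ℂ) (s t s' t' : ℝ), s < t ∧ t < s' ∧ s' < t' ∧
      Ψ (k s) ∉ closedBall 0 2 ∧ Ψ (k t) ∈ ball 0 2 ∧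
      Ψ (k s') ∉ closedBall 0 2 ∧ Ψ (k t') ∈ ball 0 2 := by
  wlog hab : a < b generalizing a b
  · exact this hne.symm (lt_of_le_of_ne (not_lt.1 hab) (ne_of_apply_ne k hne.symm))
  have hc : k b - k a ≠ 0 := sub_ne_zero.2 hne.symm
  let A : ℂ ≃ₜ ℂ := (Homeomorph.subRight (k a)).trans (Homeomorph.mulRight₀ _ (inv_ne_zero hc))
  have hρ : Continuous fun τ => (A (k τ)).re := by fun_prop
  have ha : (A (k a)).re = 0 := by simp [A]
  have hb : (A (k b)).re = 1 := by simp [A, mul_inv_cancel₀ hc]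
  obtain ⟨t, ⟨hat, htb⟩, ht⟩ : (1 / 3 : ℝ) ∈ (fun τ => (A (k τ)).re) '' Ioo a b :=
    intermediate_value_Ioo hab.le hρ.continuousOn (by norm_num [ha, hb])
  obtain ⟨s', ⟨hts, hsb⟩, hs⟩ : (2 / 3 : ℝ) ∈ (fun τ => (A (k τ)).re) '' Ioo t b :=
    intermediate_value_Ioo htb.le hρ.continuousOn (by norm_num [ht, hb])
  dsimp only at ht hs
  obtain ⟨Ψ, hΨ⟩ := exists_homeomorph_eq_of_injective_re
    ![A (k a), A (k t), A (k s'), A (k b)]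
    (by intro i j; fin_cases i <;> fin_cases j <;> norm_num [ha, hb, ht, hs]) ![3, 0, 3, 0]
  have hΨa : Ψ (A (k a)) = ⟨0, 3⟩ := ha ▸ hΨ 0
  have hΨt : Ψ (A (k t)) = ⟨1 / 3, 0⟩ := ht ▸ hΨ 1
  have hΨs : Ψ (A (k s')) = ⟨2 / 3, 3⟩ := hs ▸ hΨ 2
  have hΨb : Ψ (A (k b)) = ⟨1, 0⟩ := hb ▸ hΨ 3
  have hout (x : ℝ) : (⟨x, 3⟩ : ℂ) ∉ closedBall 0 2 := fun hx => by
    have := (Complex.abs_im_le_norm _).trans (mem_closedBall_zero_iff.1 hx)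
    norm_num at this
  have hin (x : ℝ) (hx : |x| < 2) : (⟨x, 0⟩ : ℂ) ∈ ball 0 2 :=
    mem_ball_zero_iff.2 ((Complex.norm_real x).trans_lt hx)
  refine ⟨A.trans Ψ, a, t, s', b, hat, hts, hsb, ?_, ?_, ?_, ?_⟩
  · exact hΨa ▸ hout 0
  · exact hΨt ▸ hin _ (by norm_num [abs_lt])
  · exact hΨs ▸ hout _
  · exact hΨb ▸ hin 1 (by norm_num)

end PlaneHomeomorphisms

namespace HalfPlane

/-- The boundary point of the half-plane with the given real part. -/
def ofReal (τ : ℝ) : HalfPlane := ⟨τ, (Complex.ofReal_im τ).ge⟩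

lemma continuous_ofReal : Continuous ofReal := Complex.continuous_ofReal.subtype_mk _

end HalfPlane

section BoundaryCurve

open HalfPlane

variable (e : OpenPartialHomeomorph X HalfPlane) (he : e.target = univ)

include he

lemma apply_symm_ofReal (τ : ℝ) : e (e.symm (ofReal τ)) = ofReal τ :=
  e.right_inv (he ▸ mem_univ _)

lemma symm_ofReal_mem_source (τ : ℝ) : e.symm (ofReal τ) ∈ e.source :=
  e.map_target (he ▸ mem_univ _)

lemma symm_ofReal_mem_manifoldBoundary [T2Space X] [CompactSpace X] (τ : ℝ) :
    e.symm (ofReal τ) ∈ manifoldBoundary X := fun h => by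
  have := (Cochain.mem_manifoldInterior_iff_im_pos e (symm_ofReal_mem_source e he τ)).1 h
  simp only [apply_symm_ofReal e he] at this
  exact this.ne' (Complex.ofReal_im τ)

omit he in
lemma symm_ofReal_re {x : X} (hx : x ∈ e.source) (hxb : x ∈ manifoldBoundary X) :
    e.symm (ofReal (e x).1.re) = x := by
  have : ofReal (e x).1.re = e x := Subtype.ext
    (Complex.ext rfl (im_eq_zero_of_mem_manifoldBoundary e hx hxb).symm)
  rw [this, e.left_inv hx]

end BoundaryCurve

namespace MonotoneSurfaceMap

open Cochain HalfPlane Metric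

variable [T2Space X] [CompactSpace X] [T2Space Y] [LocallyConnectedSpace X] {h : X → Y}

/-- The part of the boundary curve between the times `s` and `s'` would be cut off, over the disc,
from the part after `s'`. -/
lemma not_alternating (S : MonotoneSurfaceMap h) (e : OpenPartialHomeomorph X HalfPlane)
    (he : e.target = univ) (θ : OpenPartialHomeomorph Y ℂ) (hθ : θ.target = univ)
    (heθ : e.source ⊆ h ⁻¹' θ.source) {s t s' t' r : ℝ} (hr : 0 < r) (hst : s < t) (hts : t < s')
    (hst' : s' < t') (hs : θ (h (e.symm (ofReal s))) ∉ closedBall 0 r)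
    (ht : θ (h (e.symm (ofReal t))) ∈ ball 0 r)
    (hs' : θ (h (e.symm (ofReal s'))) ∉ closedBall 0 r) :
    θ (h (e.symm (ofReal t'))) ∉ ball 0 r := fun ht' => by
  have hmem (τ : ℝ) := symm_ofReal_mem_source e he τ
  have hB : IsOpen (e.source ∩ e ⁻¹' rect (Ioo s s') (Iio 1)) :=
    e.isOpen_inter_preimage (isOpen_rect isOpen_Ioo isOpen_Iio)
  have hcl : closure (e.source ∩ e ⁻¹' rect (Ioo s s') (Iio 1)) ⊆
      e.source ∩ e ⁻¹' rect (Icc s s') (Iic 1) :=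
    closure_minimal (fun x hx => ⟨hx.1, Ioo_subset_Icc_self hx.2.1, (mem_Iio.1 hx.2.2).le⟩)
      (isClosed_source_inter_preimage e he (isCompact_rect isCompact_Icc 1))
  have hmemB : e.symm (ofReal t') ∈ e.source ∩ e ⁻¹' rect (Ioo s s') (Iio 1) := by
    refine S.mem_of_chart θ hθ h1Trivial_univ_complex isOpen_ball (convex_ball 0 r).isPreconnected
      ball_subset_closedBall (isCompact_closedBall 0 r) (isPreconnected_compl_closedBall_complex hr)
      hB (fun x hx hxB hxD => ?_) (symm_ofReal_mem_manifoldBoundary e he t) ⟨heθ (hmem t), ht⟩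
      ⟨hmem t, ?_⟩ (symm_ofReal_mem_manifoldBoundary e he t') ⟨heθ (hmem t'), ht'⟩
    · rw [hB.frontier_eq] at hxB
      obtain ⟨hxe, hxs, -⟩ := hcl hxB.1
      have hxim : (e x).1.im < 1 :=
        (im_eq_zero_of_mem_manifoldBoundary e hxe hx).trans_lt one_pos
      have hne (τ : ℝ) (hτ : θ (h (e.symm (ofReal τ))) ∉ closedBall 0 r) : (e x).1.re ≠ τ := by
        rintro rfl
        rw [symm_ofReal_re e hxe hx] at hτ
        exact hτ hxD.2
      exact hxB.2 ⟨hxe, ⟨lt_of_le_of_ne hxs.1 (hne s hs).symm, lt_of_le_of_ne hxs.2 (hne s' hs')⟩,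
        hxim⟩
    · rw [mem_preimage, apply_symm_ofReal e he]
      exact ⟨⟨hst, hts⟩, (Complex.ofReal_im t).trans_lt one_pos⟩
  have := hmemB.2
  rw [mem_preimage, apply_symm_ofReal e he] at this
  exact lt_asymm hst' this.1.2

theorem eventually_eq_of_mem_manifoldInterior (S : MonotoneSurfaceMap h) {x : X}
    (hx : x ∈ manifoldBoundary X) (hy : h x ∈ manifoldInterior Y) :
    ∀ᶠ z in 𝓝[manifoldBoundary X] x, h z = h x := by
  obtain ⟨θ, hθ, hyθ, -⟩ := exists_disc_chart hy univ_mem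
  obtain ⟨e, he, hxe, -, heθ⟩ := S.locallyHalfPlane.exists_boundary_chart hx
    ((θ.open_source.preimage S.continuous).mem_nhds hyθ)
  filter_upwards [inter_mem_nhdsWithin _ (e.open_source.mem_nhds hxe)] with z hz
  by_contra hne
  have hk : Continuous fun τ => θ (h (e.symm (ofReal τ))) :=
    θ.continuousOn.comp_continuous
      (S.continuous.comp ((continuous_chart_symm e he).comp continuous_ofReal))
      fun τ => heθ (symm_ofReal_mem_source e he τ)
  obtain ⟨Ψ, s, t, s', t', hst, hts, hst', hs, ht, hs', ht'⟩ := exists_homeomorph_alternating hk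
    (a := (e x).1.re) (b := (e z).1.re) (by
      rw [symm_ofReal_re e hxe hx, symm_ofReal_re e hz.2 hz.1]
      exact fun heq => hne (θ.injOn (heθ hz.2) hyθ heq.symm))
  exact S.not_alternating e he (θ.transHomeomorph Ψ) (by simp [hθ]) heθ two_pos hst hts hst' hs ht
    hs' ht'

end MonotoneSurfaceMap

lemma exists_mem_connectedComponent_of_subset_image [Finite (ConnectedComponents X)] {f : X → X}
    (hf : Continuous f) {B : Set X} (hB : B ⊆ f '' B) {x : X} (hx : x ∈ B) :
    ∃ b ∈ B, b ∈ connectedComponent (f x) := by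
  have hsub : ConnectedComponents.mk '' B ⊆
      hf.connectedComponentsMap '' (ConnectedComponents.mk '' B) := by
    rintro _ ⟨b, hb, rfl⟩
    obtain ⟨a, ha, rfl⟩ := hB hb
    exact ⟨_, ⟨a, ha, rfl⟩, rfl⟩
  have hmem : ConnectedComponents.mk (f x) ∈ ConnectedComponents.mk '' B := by
    rw [eq_of_subset_of_ncard_le hsub (ncard_image_le (toFinite _)) (toFinite _)]
    exact ⟨_, ⟨x, hx, rfl⟩, rfl⟩
  obtain ⟨b, hb, hbx⟩ := hmem
  exact ⟨b, hb, ConnectedComponents.coe_eq_coe'.1 hbx⟩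

lemma mem_manifoldInterior_of_homeomorph (g : X ≃ₜ Y) {x : X} (hx : g x ∈ manifoldInterior Y) :
    x ∈ manifoldInterior X := by
  obtain ⟨e, hxe, -⟩ := mem_manifoldInterior_iff.1 hx
  exact source_subset_manifoldInterior (g.transOpenPartialHomeomorph e) (by simpa using hxe)

namespace MonotoneSurfaceMap

open Cochain

variable [T2Space X] [CompactSpace X] [T2Space Y] [LocallyConnectedSpace X] {h : X → Y}

lemma exists_mem_connectedComponent (S : MonotoneSurfaceMap h) {x : X}
    (hx : x ∈ manifoldBoundary X) : ∃ b ∈ manifoldBoundary Y, b ∈ connectedComponent (h x) := by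
  obtain ⟨g⟩ := S.nonempty_homeomorph
  have hg : ∀ a ∈ manifoldBoundary X, g a ∈ manifoldBoundary Y := fun a ha hga =>
    ha (mem_manifoldInterior_of_homeomorph g hga)
  have := g.symm.locallyConnectedSpace
  have := g.compactSpace
  have hsub : manifoldBoundary Y ⊆ (h ∘ g.symm) '' manifoldBoundary Y := fun y hy => by
    obtain ⟨a, ha, rfl⟩ := S.manifoldBoundary_subset_image hy
    exact ⟨g a, hg a ha, by simp⟩
  simpa using exists_mem_connectedComponent_of_subset_image
    (S.continuous.comp g.symm.continuous) hsub (hg x hx)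

/-- Otherwise join `x` to a boundary point lying over `∂Y`. Since `h` is locally constant on the
part of `∂X` over `Int Y`, that part of the fibre of `h x` is open in `∂X` and cuts the arc. -/
theorem mem_manifoldInterior_of_apply_mem (S : MonotoneSurfaceMap h) {x : X}
    (hy : h x ∈ manifoldInterior Y) : x ∈ manifoldInterior X := by
  by_contra hx
  obtain ⟨b, hb, hbx⟩ := S.exists_mem_connectedComponent hx
  obtain ⟨x', hx', rfl⟩ := S.manifoldBoundary_subset_image hb
  obtain ⟨g⟩ := S.nonempty_homeomorph
  have := g.symm.locallyConnectedSpace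
  obtain ⟨φ, ψ, hbridge⟩ := exists_isBridge S.locallyHalfPlane
    (isOpen_connectedComponent.preimage S.continuous)
    (S.isPreconnected_preimage isPreconnected_connectedComponent)
    (x := x) ⟨mem_connectedComponent, hx⟩ ⟨hbx, hx'⟩
  obtain ⟨θ, hθ, hxθ, -⟩ := exists_disc_chart hy univ_mem
  obtain ⟨f, hf⟩ := S.exists_primitive_preimage hbridge.exactAt
    (h1Trivial_source h1Trivial_univ_complex θ hθ)
  obtain ⟨N, hN, hFN, hNU⟩ := normal_exists_closure_subset
    ((isClosed_singleton.preimage S.continuous).inter isOpen_manifoldInterior.isClosed_compl :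
      IsClosed (h ⁻¹' {h x} ∩ manifoldBoundary X))
    ((isOpen_interior (s := {z | z ∈ manifoldBoundary X → h z = h x})).inter
      (θ.open_source.preimage S.continuous)) fun z ⟨hz, hzb⟩ => by
    rw [mem_preimage, mem_singleton_iff] at hz
    refine ⟨mem_interior_iff_mem_nhds.2 ?_, by rwa [mem_preimage, hz]⟩
    rw [← hz] at hy ⊢
    exact eventually_nhdsWithin_iff.1 (S.eventually_eq_of_mem_manifoldInterior hzb hy)
  have hfiber : ∀ z ∈ manifoldBoundary X, z ∈ closure N → h z = h x := fun z hz hzN =>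
    interior_subset (hNU hzN).1 hz
  suffices x' ∈ N from hb (hfiber x' hx' (subset_closure this) ▸ hy)
  refine hbridge.mem_of_primitive (f := f) hN (hFN ⟨rfl, hx⟩)
    (fun z _ hzN => hf z (hNU (subset_closure hzN)).2) fun z hz hzN => ?_
  rw [hN.frontier_eq] at hzN
  exact absurd (hFN ⟨hfiber z hz hzN.1, hz⟩) hzN.2

end MonotoneSurfaceMap

/-- The identification of Mathlib's model space with `HalfPlane`. The coordinates are swapped: the
nonnegative coordinate of `EuclideanHalfSpace` is the zeroth one. -/
noncomputable def euclideanHalfSpaceHomeomorph : EuclideanHalfSpace 2 ≃ₜ HalfPlane where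
  toFun x := ⟨⟨x.1 1, x.1 0⟩, x.2⟩
  invFun z := ⟨!₂[z.1.im, z.1.re], z.2⟩
  left_inv x := Subtype.ext <| by
    ext i
    fin_cases i <;> rfl
  right_inv _ := rfl
  continuous_toFun := by
    have hcoord (i : Fin 2) : Continuous fun x : EuclideanHalfSpace 2 => x.1 i :=
      (EuclideanSpace.proj i).continuous.comp continuous_subtype_val
    exact .subtype_mk (Complex.equivRealProdCLM.symm.continuous.comp
      ((hcoord 1).prodMk (hcoord 0))) _
  continuous_invFun := by
    fun_prop

lemma locallyHalfPlane_of_chartedSpace [ChartedSpace (EuclideanHalfSpace 2) X] :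
    LocallyHalfPlane X := fun x =>
  ⟨(chartAt (EuclideanHalfSpace 2) x).transHomeomorph euclideanHalfSpaceHomeomorph, by simp⟩

theorem monotone_map_boundary
    (X Y : Type)
    [TopologicalSpace X] [TopologicalSpace Y]
    -- `X` and `Y` are compact 2-manifolds with boundary:
    [ChartedSpace (EuclideanHalfSpace 2) X] [T2Space X] [CompactSpace X]
    [ChartedSpace (EuclideanHalfSpace 2) Y] [T2Space Y] [CompactSpace Y]
    -- that are homeomorphic:
    (hhomeo : Nonempty (X ≃ₜ Y))
    -- `h` is continuous, surjective and monotone: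
    (h : X → Y) (hc : Continuous h) (hs : Function.Surjective h)
    (hm : ∀ y : Y, IsPreconnected (h ⁻¹' {y})) :
    manifoldInterior Y ⊆ h '' manifoldInterior X ∧
    manifoldBoundary Y = h '' manifoldBoundary X ∧
    ∀ y ∈ manifoldBoundary Y, IsPreconnected (h ⁻¹' {y} ∩ manifoldBoundary X) := by
  have : LocallyConnectedSpace X := ChartedSpace.locallyConnectedSpace (EuclideanHalfSpace 2) X
  have S : MonotoneSurfaceMap h := ⟨locallyHalfPlane_of_chartedSpace, hhomeo, hc, hs, hm⟩
  refine ⟨fun y hy => ?_, S.manifoldBoundary_subset_image.antisymm ?_,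
    fun y => S.isPreconnected_fiber_inter_manifoldBoundary⟩
  · obtain ⟨x, rfl⟩ := hs y
    exact mem_image_of_mem h (S.mem_manifoldInterior_of_apply_mem hy)
  · rintro _ ⟨x, hx, rfl⟩ hy
    exact hx (S.mem_manifoldInterior_of_apply_mem hy)
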